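/- arXiv:1312.5473 — 3 statements merged into one kernel-verified Lean document; each statement's English description precedes it below -/
import Mathlib

section
/- Local Poincaré inequality: there exists C_PI ∈ (0,∞), depending only on d, C_reg and C_riso, such that for every choice of edge weights ω, every x₀ ∈ V, every n ≥ 1 and every u : V → ℝ, writing B(n) := B(x₀,n), one has ‖u − (u)_{B(n)}‖²_{2,B(n)} ≤ C_PI · ‖ν^ω‖_{d/2,B(n)} · (n²/|B(n)|) · Σ_{x,y∈B(n), x∼y} ω(x,y)·(u(x)−u(y))². -/
open Finset MeasureTheory
open scoped ENNReal

noncomputable section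

namespace RCM

variable {V : Type*}

/-- `μ^ω(x)`, the sum of the weights of edges incident to `x`. -/
def mu (nbr : V → Finset V) (ω : V → V → ℝ) (x : V) : ℝ := ∑ y ∈ nbr x, ω x y

/-- `ν^ω(x)`, the sum of the reciprocals of the weights of edges incident to `x`. -/
def nu (nbr : V → Finset V) (ω : V → V → ℝ) (x : V) : ℝ := ∑ y ∈ nbr x, (ω x y)⁻¹

/-- `(L_Y^ω f)(x)`. -/
def lap (nbr : V → Finset V) (ω : V → V → ℝ) (f : V → ℝ) (x : V) : ℝ :=
  (mu nbr ω x)⁻¹ * ∑ y ∈ nbr x, ω x y * (f y - f x)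

/-- space-averaged norm `‖f‖_{p,A}` for a real exponent `p`. -/
def nrm (A : Finset V) (p : ℝ) (f : V → ℝ) : ℝ :=
  ((A.card : ℝ)⁻¹ * ∑ x ∈ A, |f x| ^ p) ^ (1 / p)

/-- weighted space-averaged norm `‖f‖_{p,A,φ}` for a real exponent `p`. -/
def nrmW (A : Finset V) (p : ℝ) (φ : V → ℝ) (f : V → ℝ) : ℝ :=
  ((A.card : ℝ)⁻¹ * ∑ x ∈ A, |f x| ^ p * φ x) ^ (1 / p)

/-- space-averaged norm `‖f‖_{p,A}` for an extended exponent `p ∈ (0,∞]`;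
for `p = ∞` this is the maximum of `|f|` over `A`. -/
def nrmE (A : Finset V) (p : ℝ≥0∞) (f : V → ℝ) : ℝ :=
  if p = ⊤ then sSup ((fun x => |f x|) '' (A : Set V)) else nrm A p.toReal f

/-- weighted average `(u)_{A,π}`. -/
def wavg (A : Finset V) (π : V → ℝ) (u : V → ℝ) : ℝ :=
  (∑ x ∈ A, π x * u x) / ∑ x ∈ A, π x

open Classical in
/-- relative internal boundary `∂_B A`. -/
def relBdry (G : SimpleGraph V) (B A : Finset V) : Finset V :=
  A.filter fun z => ∃ y ∈ B, y ∉ A ∧ G.Adj z y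

open Classical in
/-- internal boundary `∂B`. -/
def intBdry (G : SimpleGraph V) (B : Finset V) : Finset V :=
  B.filter fun z => ∃ y, y ∉ B ∧ G.Adj z y

open Classical in
/-- Dirichlet sum `Σ_{x,y ∈ B, x∼y} ω(x,y) (u(x)-u(y))²`. -/
def dSum (G : SimpleGraph V) (ω : V → V → ℝ) (B : Finset V) (u : V → ℝ) : ℝ :=
  ∑ x ∈ B, ∑ y ∈ B, if G.Adj x y then ω x y * (u x - u y) ^ 2 else 0

/-- `E^ω_{η²}(u) = (1/2) Σ_{x,y} η(x)² ω(x,y) (u(y)-u(x))²`. -/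
def energySq (ω : V → V → ℝ) (η u : V → ℝ) : ℝ :=
  (1 / 2) * ∑' x, ∑' y, η x ^ 2 * ω x y * (u y - u x) ^ 2

/-- `E^{ω,η}(u) = (1/2) Σ_{x,y} min(η(x)²,η(y)²) ω(x,y) (u(y)-u(x))²`. -/
def energyMin (ω : V → V → ℝ) (η u : V → ℝ) : ℝ :=
  (1 / 2) * ∑' x, ∑' y, min (η x ^ 2) (η y ^ 2) * ω x y * (u y - u x) ^ 2

/-- `‖∇η‖_{ℓ∞(E)}`, the supremum of `|η(y)-η(x)|` over edges `{x,y}`. -/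
def gradSup (G : SimpleGraph V) (η : V → ℝ) : ℝ :=
  sSup {r : ℝ | ∃ x y, G.Adj x y ∧ r = |η y - η x|}

/-- `u` is caloric on `I × B`: `∂_t u = L_Y^ω u` on `I × B`. -/
def Caloric (nbr : V → Finset V) (ω : V → V → ℝ) (I : Set ℝ) (B : Set V)
    (u : ℝ → V → ℝ) : Prop :=
  ∀ x ∈ B, ∀ t ∈ I, HasDerivAt (fun s => u s x) (lap nbr ω (u t) x) t

/-- `u` is sub-caloric on `I × B`: `∂_t u ≤ L_Y^ω u` on `I × B`. -/
def SubCaloric (nbr : V → Finset V) (ω : V → V → ℝ) (I : Set ℝ) (B : Set V)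
    (u : ℝ → V → ℝ) : Prop :=
  ∀ x ∈ B, ∀ t ∈ I, ∃ d, HasDerivAt (fun s => u s x) d t ∧ d ≤ lap nbr ω (u t) x

/-- `u` is super-caloric on `I × B`: `∂_t u ≥ L_Y^ω u` on `I × B`. -/
def SuperCaloric (nbr : V → Finset V) (ω : V → V → ℝ) (I : Set ℝ) (B : Set V)
    (u : ℝ → V → ℝ) : Prop :=
  ∀ x ∈ B, ∀ t ∈ I, ∃ d, HasDerivAt (fun s => u s x) d t ∧ lap nbr ω (u t) x ≤ d

/-- space-time norm `‖u‖_{p,[a,b]×B,φ}`. -/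
def nrmST (a b : ℝ) (B : Finset V) (p : ℝ) (φ : V → ℝ) (u : ℝ → V → ℝ) : ℝ :=
  ((b - a)⁻¹ * ∫ t in a..b, nrmW B p φ (u t) ^ p) ^ (1 / p)

end RCM

namespace RCM

lemma rpow_sum_le_sum_rpow {ι : Type*} (s : Finset ι) (a : ι → ℝ) (ha : ∀ i ∈ s, 0 ≤ a i)
    {θ : ℝ} (h0 : 0 < θ) (h1 : θ ≤ 1) : (∑ i ∈ s, a i) ^ θ ≤ ∑ i ∈ s, a i ^ θ :=
  Finset.le_sum_of_subadditive_on_pred (fun x : ℝ => x ^ θ) (fun x => 0 ≤ x)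
    (by simp [Real.zero_rpow h0.ne'])
    (fun _ _ hx hy => Real.rpow_add_le_add_rpow hx hy h0.le h1)
    (fun _ _ hx hy => add_nonneg hx hy) a ha

lemma abs_rpow_sub_rpow_le {a b α : ℝ} (ha : 0 ≤ a) (hb : 0 ≤ b) (hα : 1 ≤ α) :
    |a ^ α - b ^ α| ≤ α * (|a - b| * a ^ (α - 1) + |b - a| * b ^ (α - 1)) := by
  wlog hab : b ≤ a generalizing a b
  · have := this hb ha (le_of_not_ge hab)
    rw [abs_sub_comm]
    linarith
  have hmono : b ^ α ≤ a ^ α := Real.rpow_le_rpow hb hab (by linarith)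
  have hb' : 0 ≤ |b - a| * b ^ (α - 1) := by positivity
  rw [abs_of_nonneg (sub_nonneg.2 hmono), abs_of_nonneg (sub_nonneg.2 hab)]
  suffices h : a ^ α - b ^ α ≤ α * ((a - b) * a ^ (α - 1)) by nlinarith
  rcases ha.eq_or_lt with rfl | hpos
  · have : b = 0 := le_antisymm hab hb
    subst this
    simp
  have hB := one_add_mul_self_le_rpow_one_add (s := b / a - 1)
    (by have : 0 ≤ b / a := by positivity
        linarith) hα
  rw [add_sub_cancel, Real.div_rpow hb ha] at hB
  have hapos : 0 < a ^ α := Real.rpow_pos_of_pos hpos _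
  rw [le_div_iff₀ hapos] at hB
  have hsplit : a ^ α = a * a ^ (α - 1) := by
    rw [Real.rpow_sub_one hpos.ne']
    field_simp
  have : (1 + α * (b / a - 1)) * a ^ α = a ^ α - α * ((a - b) * a ^ (α - 1)) := by
    rw [hsplit]
    field_simp
    ring
  linarith

lemma exists_median {V : Type*} (B : Finset V) (hB : B.Nonempty) (u : V → ℝ) :
    ∃ m : ℝ, 2 * #{x ∈ B | m < u x} ≤ #B ∧ 2 * #{x ∈ B | u x < m} ≤ #B := by
  classical
  let T : Finset V := {x ∈ B | 2 * #{y ∈ B | u x < u y} ≤ #B}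
  have hT : T.Nonempty := by
    obtain ⟨x, hx, hmax⟩ := B.exists_max_image u hB
    refine ⟨x, mem_filter.2 ⟨hx, ?_⟩⟩
    rw [filter_false_of_mem fun y hy => not_lt.2 (hmax y hy)]
    simp
  obtain ⟨x, hx, hmin⟩ := T.exists_min_image u hT
  refine ⟨u x, (mem_filter.1 hx).2, ?_⟩
  by_contra! hlt
  have hne : ({y ∈ B | u y < u x} : Finset V).Nonempty := by
    rw [← card_pos]
    lia
  obtain ⟨z, hz, hzmax⟩ := exists_max_image _ u hne
  rw [mem_filter] at hz
  have hsub : ({y ∈ B | u z < u y} : Finset V) ⊆ {y ∈ B | ¬ u y < u x} := by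
    intro y hy
    rw [mem_filter] at hy ⊢
    exact ⟨hy.1, fun h => absurd (hzmax y (mem_filter.2 ⟨hy.1, h⟩)) (not_le.2 hy.2)⟩
  have hcard := card_le_card hsub
  have htot := card_filter_add_card_filter_not (s := B) (fun y => u y < u x)
  have hzT : z ∈ T := mem_filter.2 ⟨hz.1, by lia⟩
  exact absurd (hmin z hzT) (not_le.2 hz.2)

lemma sum_sub_wavg_sq_le {V : Type*} (B : Finset V) (hB : B.Nonempty) (u : V → ℝ) (m : ℝ) :
    ∑ x ∈ B, (u x - wavg B (fun _ => 1) u) ^ 2 ≤ ∑ x ∈ B, (u x - m) ^ 2 := by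
  have hc : (0 : ℝ) < #B := by exact_mod_cast hB.card_pos
  set a := wavg B (fun _ => 1) u with ha
  have hsum : ∑ x ∈ B, u x = #B * a := by
    simp only [ha, wavg, one_mul, sum_const, nsmul_eq_mul, mul_one]
    field_simp
  have hz : ∑ x ∈ B, (u x - a) = 0 := by simp [hsum]
  have key : ∑ x ∈ B, (u x - m) ^ 2 =
      ∑ x ∈ B, (u x - a) ^ 2 + 2 * (a - m) * ∑ x ∈ B, (u x - a) + #B * (a - m) ^ 2 := by
    rw [mul_sum, ← nsmul_eq_mul, ← sum_const, ← sum_add_distrib, ← sum_add_distrib]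
    exact sum_congr rfl fun x _ => by ring
  rw [key, hz]
  nlinarith [sq_nonneg (a - m)]

open Classical in
/-- An isoperimetric inequality for sets of at most half the size of `B` implies the corresponding
Sobolev inequality for functions supported on at most half of `B`. -/
theorem sobolev_of_isoperimetric {V : Type*} (B : Finset V) (w : V → V → ℝ)
    (hw : ∀ x y, 0 ≤ w x y) {c q : ℝ} (hc : 0 ≤ c) (hq : 1 ≤ q)
    (hiso : ∀ S ⊆ B, S.Nonempty → 2 * #S ≤ #B → c * (#S : ℝ) ^ (1 / q) ≤
      ∑ x ∈ B, ∑ y ∈ B, w x y * |(if x ∈ S then (1 : ℝ) else 0) - if y ∈ S then 1 else 0|)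
    (f : V → ℝ) (hf : ∀ x, 0 ≤ f x) (hhalf : 2 * #{x ∈ B | 0 < f x} ≤ #B) :
    c * (∑ x ∈ B, f x ^ q) ^ (1 / q) ≤ ∑ x ∈ B, ∑ y ∈ B, w x y * |f x - f y| := by
  have hq0 : 0 < q := by linarith
  induction hk : #{x ∈ B | 0 < f x} using Nat.strong_induction_on generalizing f with
  | _ k ih =>
  set S : Finset V := {x ∈ B | 0 < f x} with hS
  have hout : ∀ x ∈ B, x ∉ S → f x = 0 := by
    intro x hx hxS
    by_contra h
    exact hxS (mem_filter.2 ⟨hx, lt_of_le_of_ne (hf x) (Ne.symm h)⟩)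
  rcases S.eq_empty_or_nonempty with hemp | hne
  · have hzero : ∀ x ∈ B, f x ^ q = 0 := by
      intro x hx
      rw [hout x hx (by simp [hemp]), Real.zero_rpow hq0.ne']
    rw [sum_congr rfl hzero, sum_const_zero, Real.zero_rpow (by positivity), mul_zero]
    exact sum_nonneg fun x _ => sum_nonneg fun y _ => mul_nonneg (hw x y) (abs_nonneg _)
  obtain ⟨p, hp, hmin⟩ := S.exists_min_image f hne
  set m := f p
  have hm : 0 < m := (mem_filter.1 hp).2
  let f' : V → ℝ := fun x => max (f x - m) 0
  have hsub : ({x ∈ B | 0 < f' x} : Finset V) ⊂ S := by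
    refine (Finset.ssubset_iff_of_subset ?_).2 ⟨p, hp, by simp [f', m]⟩
    intro x hx
    simp only [f', mem_filter, lt_max_iff, lt_irrefl, or_false, sub_pos, hS] at hx ⊢
    exact ⟨hx.1, hm.trans hx.2⟩
  have hlt := card_lt_card hsub
  have hih := ih _ (hk ▸ hlt) f' (fun x => le_max_right _ _) (by lia) rfl
  have hSiso := hiso S (filter_subset _ _) hne hhalf
  have hdec : ∀ x ∈ B, f x = m * (if x ∈ S then (1 : ℝ) else 0) + f' x := by
    intro x hx
    by_cases hxS : x ∈ S
    · have := hmin x hxS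
      simp [f', hxS, max_eq_left (sub_nonneg.2 this)]
    · simp [f', hxS, hout x hx hxS, hm.le]
  have hgrad : ∑ x ∈ B, ∑ y ∈ B, w x y * |f x - f y| =
      m * ∑ x ∈ B, ∑ y ∈ B, w x y *
        |(if x ∈ S then (1 : ℝ) else 0) - if y ∈ S then 1 else 0| +
      ∑ x ∈ B, ∑ y ∈ B, w x y * |f' x - f' y| := by
    simp only [mul_sum, ← sum_add_distrib]
    refine sum_congr rfl fun x hx => sum_congr rfl fun y hy => ?_
    rw [mul_left_comm, ← mul_add]
    congr 1
    rw [hdec x hx, hdec y hy]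
    by_cases hxS : x ∈ S <;> by_cases hyS : y ∈ S
    · simp [hxS, hyS]
    · have h0 : f' y = 0 := by simp [f', hout y hy hyS, hm.le]
      have h1 : 0 ≤ f' x := le_max_right _ _
      simp [hxS, hyS, h0, abs_of_nonneg h1, abs_of_nonneg (add_nonneg hm.le h1)]
    · have h0 : f' x = 0 := by simp [f', hout x hx hxS, hm.le]
      have h1 : 0 ≤ f' y := le_max_right _ _
      simp only [hxS, hyS, h0, if_true, if_false, mul_zero, mul_one, zero_add, zero_sub, abs_neg,
        abs_one, abs_of_nonneg h1, abs_of_nonneg (add_nonneg hm.le h1)]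
    · simp [hxS, hyS]
  have hMink : (∑ x ∈ B, f x ^ q) ^ (1 / q) ≤
      m * (#S : ℝ) ^ (1 / q) + (∑ x ∈ B, f' x ^ q) ^ (1 / q) := by
    rw [sum_congr rfl fun x hx => by rw [hdec x hx]]
    refine (Real.Lp_add_le_of_nonneg B hq (fun x _ => by positivity)
      (fun x _ => le_max_right _ _)).trans (add_le_add_left (le_of_eq ?_) _)
    have hpow : ∀ x ∈ B, (m * (if x ∈ S then (1 : ℝ) else 0)) ^ q = if x ∈ S then m ^ q else 0 := by
      intro x _
      split_ifs
      · simp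
      · simp [Real.zero_rpow hq0.ne']
    rw [sum_congr rfl hpow, ← sum_filter, sum_const, nsmul_eq_mul]
    have hfil : ({x ∈ B | x ∈ S} : Finset V) = S := by
      ext x
      simp [hS]
    rw [hfil, Real.mul_rpow (by positivity) (by positivity), ← Real.rpow_mul hm.le,
      mul_one_div_cancel hq0.ne', Real.rpow_one, mul_comm]
  rw [hgrad]
  calc c * (∑ x ∈ B, f x ^ q) ^ (1 / q)
      ≤ c * (m * (#S : ℝ) ^ (1 / q) + (∑ x ∈ B, f' x ^ q) ^ (1 / q)) := by gcongr
    _ = m * (c * (#S : ℝ) ^ (1 / q)) + c * (∑ x ∈ B, f' x ^ q) ^ (1 / q) := by ring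
    _ ≤ _ := by gcongr

lemma sum_mul_rpow_le {V : Type*} (B : Finset V) {d : ℝ} (hd : 2 ≤ d) (ν g : V → ℝ)
    (hν : ∀ x, 0 ≤ ν x) (hg : ∀ x, 0 ≤ g x) :
    ∑ x ∈ B, ν x * g x ^ (2 * (d - 2) / d) ≤
      (∑ x ∈ B, ν x ^ (d / 2)) ^ (2 / d) * (∑ x ∈ B, g x ^ 2) ^ ((d - 2) / d) := by
  have hd0 : 0 < d := by linarith
  rcases hd.eq_or_lt with rfl | hd2
  · simp
  have hconj : (d / 2).HolderConjugate (d / (d - 2)) := by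
    have h2 : 0 < d - 2 := by linarith
    rw [Real.holderConjugate_iff]
    refine ⟨by linarith, ?_⟩
    field_simp
    ring
  refine (Real.inner_le_Lp_mul_Lq_of_nonneg B hconj (fun x _ => hν x)
    (fun x _ => Real.rpow_nonneg (hg x) _)).trans (le_of_eq ?_)
  have hexp : ∀ x ∈ B, (g x ^ (2 * (d - 2) / d)) ^ (d / (d - 2)) = g x ^ 2 := by
    intro x _
    have h2 : d - 2 ≠ 0 := by linarith
    rw [← Real.rpow_mul (hg x), ← Real.rpow_natCast]
    congr 1
    push_cast
    field_simp
  rw [sum_congr rfl hexp, one_div_div, one_div_div]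

open Classical in
/-- The truncated form of the weighted Poincaré inequality: the `ℓ²`-norm of a nonnegative function
supported on at most half of `B` is controlled by its weighted Dirichlet energy. -/
theorem sum_sq_le_of_isoperimetric {V : Type*} (G : SimpleGraph V) (nbr : V → Finset V)
    (hnbr : ∀ x y, y ∈ nbr x ↔ G.Adj x y) (ω : V → V → ℝ) (hω : ∀ x y, G.Adj x y → 0 < ω x y)
    (B : Finset V) {c : ℝ} (hc : 0 < c) {d : ℝ} (hd : 2 ≤ d)
    (hiso : ∀ S ⊆ B, S.Nonempty → 2 * #S ≤ #B →
      c * (#S : ℝ) ^ ((d - 1) / d) ≤ #(relBdry G B S))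
    (g : V → ℝ) (hg : ∀ x, 0 ≤ g x) (hhalf : 2 * #{x ∈ B | 0 < g x} ≤ #B) :
    ∑ x ∈ B, g x ^ 2 ≤
      16 / c ^ 2 * (∑ x ∈ B, nu nbr ω x ^ (d / 2)) ^ (2 / d) * dSum G ω B g := by
  have hd0 : 0 < d := by linarith
  have hd1 : 0 < d - 1 := by linarith
  set α : ℝ := 2 * (d - 1) / d with hα
  have hα1 : 1 ≤ α := by
    rw [hα, le_div_iff₀ hd0]
    linarith
  have hα2 : α ≤ 2 := by
    rw [hα, div_le_iff₀ hd0]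
    linarith
  have hν : ∀ x, 0 ≤ nu nbr ω x := fun x =>
    sum_nonneg fun y hy => inv_nonneg.2 (hω x y ((hnbr x y).1 hy)).le
  set w : V → V → ℝ := fun x y => if G.Adj x y then 1 else 0 with hwdef
  have hw : ∀ x y, 0 ≤ w x y := fun x y => by
    simp only [hwdef]
    split_ifs <;> norm_num
  have hwsymm : ∀ x y, w x y = w y x := fun x y => by simp only [hwdef, G.adj_comm]
  set X := ∑ x ∈ B, g x ^ 2 with hX
  have hX0 : 0 ≤ X := sum_nonneg fun x _ => sq_nonneg _
  set N := (∑ x ∈ B, nu nbr ω x ^ (d / 2)) ^ (2 / d) with hN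
  have hN0 : 0 ≤ N := Real.rpow_nonneg (sum_nonneg fun x _ => Real.rpow_nonneg (hν x) _) _
  have hE0 : 0 ≤ dSum G ω B g := by
    refine sum_nonneg fun x _ => sum_nonneg fun y _ => ?_
    split_ifs with h
    · have := hω x y h
      positivity
    · exact le_rfl
  -- the Sobolev inequality for `g ^ α`
  have hsob : c * X ^ ((d - 1) / d) ≤ ∑ x ∈ B, ∑ y ∈ B, w x y * |g x ^ α - g y ^ α| := by
    have hq : 1 ≤ d / (d - 1) := by
      rw [le_div_iff₀ hd1]
      linarith
    have hsupp : ({x ∈ B | 0 < g x ^ α} : Finset V) = {x ∈ B | 0 < g x} :=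
      filter_congr fun x _ => by
        rw [(Real.rpow_nonneg (hg x) α).lt_iff_ne', (hg x).lt_iff_ne', Ne,
          Real.rpow_eq_zero (hg x) (by linarith)]
    have h := sobolev_of_isoperimetric B w hw hc.le hq ?_ (fun x => g x ^ α)
      (fun x => Real.rpow_nonneg (hg x) _) (by rw [hsupp]; exact hhalf)
    · have hpow : ∀ x ∈ B, (g x ^ α) ^ (d / (d - 1)) = g x ^ 2 := by
        intro x _
        rw [← Real.rpow_mul (hg x), ← Real.rpow_natCast]
        congr 1
        rw [hα]
        push_cast
        field_simp
      rwa [sum_congr rfl hpow, one_div_div] at h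
    · intro S hSB hSne hS
      rw [one_div_div]
      refine (hiso S hSB hSne hS).trans ?_
      have hsub : relBdry G B S ⊆ B := (filter_subset _ _).trans hSB
      have hnn : ∀ x y, 0 ≤ w x y *
          |(if x ∈ S then (1 : ℝ) else 0) - if y ∈ S then 1 else 0| :=
        fun x y => mul_nonneg (hw x y) (abs_nonneg _)
      calc (#(relBdry G B S) : ℝ) = ∑ x ∈ relBdry G B S, (1 : ℝ) := by simp
        _ ≤ ∑ x ∈ relBdry G B S, ∑ y ∈ B, w x y *
            |(if x ∈ S then (1 : ℝ) else 0) - if y ∈ S then 1 else 0| := by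
          refine sum_le_sum fun x hx => ?_
          obtain ⟨hxS, y, hyB, hyS, hxy⟩ := mem_filter.1 hx
          refine le_trans ?_ (single_le_sum (fun y _ => hnn x y) hyB)
          simp [hwdef, hxS, hyS, hxy]
        _ ≤ _ := sum_le_sum_of_subset_of_nonneg hsub fun x _ _ => sum_nonneg fun y _ => hnn x y
  set T := ∑ x ∈ B, ∑ y ∈ B, w x y * (|g x - g y| * g x ^ (α - 1)) with hT
  have hT0 : 0 ≤ T := sum_nonneg fun x _ => sum_nonneg fun y _ =>
    mul_nonneg (hw x y) (mul_nonneg (abs_nonneg _) (Real.rpow_nonneg (hg x) _))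
  have hgrad : ∑ x ∈ B, ∑ y ∈ B, w x y * |g x ^ α - g y ^ α| ≤ 4 * T := by
    have hswap : ∑ x ∈ B, ∑ y ∈ B, w x y * (|g y - g x| * g y ^ (α - 1)) = T := by
      rw [hT, sum_comm]
      exact sum_congr rfl fun x _ => sum_congr rfl fun y _ => by rw [hwsymm]
    calc ∑ x ∈ B, ∑ y ∈ B, w x y * |g x ^ α - g y ^ α|
        ≤ ∑ x ∈ B, ∑ y ∈ B, w x y *
            (α * (|g x - g y| * g x ^ (α - 1) + |g y - g x| * g y ^ (α - 1))) :=
          sum_le_sum fun x _ => sum_le_sum fun y _ =>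
            mul_le_mul_of_nonneg_left (abs_rpow_sub_rpow_le (hg x) (hg y) hα1) (hw x y)
      _ = α * (T + ∑ x ∈ B, ∑ y ∈ B, w x y * (|g y - g x| * g y ^ (α - 1))) := by
          rw [hT]
          simp only [← sum_add_distrib, mul_sum]
          exact sum_congr rfl fun x _ => sum_congr rfl fun y _ => by ring
      _ ≤ 4 * T := by
          rw [hswap]
          nlinarith
  have hCS : T ^ 2 ≤ dSum G ω B g * ∑ x ∈ B, nu nbr ω x * g x ^ (2 * (d - 2) / d) := by
    have hsq : ∀ x, (g x ^ (α - 1)) ^ 2 = g x ^ (2 * (d - 2) / d) := by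
      intro x
      rw [← Real.rpow_natCast, ← Real.rpow_mul (hg x)]
      congr 1
      rw [hα]
      push_cast
      field_simp
      ring
    have h := sum_sq_le_sum_mul_sum_of_sq_le_mul (B ×ˢ B)
      (r := fun p => w p.1 p.2 * (|g p.1 - g p.2| * g p.1 ^ (α - 1)))
      (f := fun p => if G.Adj p.1 p.2 then ω p.1 p.2 * (g p.1 - g p.2) ^ 2 else 0)
      (g := fun p => if G.Adj p.1 p.2 then (ω p.1 p.2)⁻¹ * g p.1 ^ (2 * (d - 2) / d) else 0)
      ?_ ?_ ?_
    · rw [sum_product, sum_product, sum_product] at h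
      refine h.trans (mul_le_mul_of_nonneg_left (sum_le_sum fun x _ => ?_) hE0)
      dsimp only
      rw [← sum_filter, ← sum_mul]
      refine mul_le_mul_of_nonneg_right ?_ (Real.rpow_nonneg (hg x) _)
      refine sum_le_sum_of_subset_of_nonneg ?_ fun y hy _ =>
        inv_nonneg.2 (hω x y ((hnbr x y).1 hy)).le
      intro y hy
      exact (hnbr x y).2 (mem_filter.1 hy).2
    · intro p _
      split_ifs with hp
      · have := hω _ _ hp
        positivity
      · exact le_rfl
    · intro p _
      split_ifs with hp
      · have := hω _ _ hp
        have := Real.rpow_nonneg (hg p.1) (2 * (d - 2) / d)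
        positivity
      · exact le_rfl
    · intro p _
      refine le_of_eq ?_
      by_cases hp : G.Adj p.1 p.2
      · have := (hω _ _ hp).ne'
        simp only [hwdef, hp, if_true, one_mul, mul_pow, hsq, sq_abs]
        field_simp
      · simp [hwdef, hp]
  have hhol := sum_mul_rpow_le B hd (nu nbr ω) g hν hg
  rw [← hX, ← hN] at hhol
  rcases hX0.eq_or_lt with hX' | hXpos
  · rw [← hX']
    positivity
  have hXd : 0 < X ^ ((d - 2) / d) := Real.rpow_pos_of_pos hXpos _
  have hmain : (c * X ^ ((d - 1) / d)) ^ 2 ≤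
      16 * (dSum G ω B g * (N * X ^ ((d - 2) / d))) := by
    calc (c * X ^ ((d - 1) / d)) ^ 2 ≤ (4 * T) ^ 2 := by
          exact pow_le_pow_left₀ (by positivity) (hsob.trans hgrad) 2
      _ = 16 * T ^ 2 := by ring
      _ ≤ _ := by
          gcongr
          exact hCS.trans (mul_le_mul_of_nonneg_left hhol hE0)
  have hsplit : (X ^ ((d - 1) / d)) ^ 2 = X * X ^ ((d - 2) / d) := by
    rw [← Real.rpow_natCast, ← Real.rpow_mul hX0]
    nth_rewrite 2 [← Real.rpow_one X]
    rw [← Real.rpow_add hXpos]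
    congr 1
    push_cast
    field_simp
    ring
  rw [mul_pow, hsplit] at hmain
  have hfin : c ^ 2 * X ≤ 16 * (dSum G ω B g * N) := by
    refine le_of_mul_le_mul_right ?_ hXd
    linarith
  rw [div_mul_eq_mul_div, div_mul_eq_mul_div, le_div_iff₀ (by positivity)]
  linarith

/-- A relative isoperimetric inequality in `B` implies the weighted Poincaré inequality on `B`. -/
theorem sum_sub_wavg_sq_le_of_isoperimetric {V : Type*} (G : SimpleGraph V) (nbr : V → Finset V)
    (hnbr : ∀ x y, y ∈ nbr x ↔ G.Adj x y) (ω : V → V → ℝ) (hω : ∀ x y, G.Adj x y → 0 < ω x y)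
    (B : Finset V) (hB : B.Nonempty) {c : ℝ} (hc : 0 < c) {d : ℝ} (hd : 2 ≤ d)
    (hiso : ∀ S ⊆ B, S.Nonempty → 2 * #S ≤ #B →
      c * (#S : ℝ) ^ ((d - 1) / d) ≤ #(relBdry G B S)) (u : V → ℝ) :
    ∑ x ∈ B, (u x - wavg B (fun _ => 1) u) ^ 2 ≤
      32 / c ^ 2 * (∑ x ∈ B, nu nbr ω x ^ (d / 2)) ^ (2 / d) * dSum G ω B u := by
  obtain ⟨m, hpos, hneg⟩ := exists_median B hB u
  have hN0 : 0 ≤ 16 / c ^ 2 * (∑ x ∈ B, nu nbr ω x ^ (d / 2)) ^ (2 / d) := by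
    have hν : ∀ x, 0 ≤ nu nbr ω x := fun x =>
      sum_nonneg fun y hy => inv_nonneg.2 (hω x y ((hnbr x y).1 hy)).le
    have := Real.rpow_nonneg (sum_nonneg fun x (_ : x ∈ B) =>
      Real.rpow_nonneg (hν x) (d / 2)) (2 / d)
    positivity
  have hmono : ∀ g : V → ℝ, (∀ x y, |g x - g y| ≤ |u x - u y|) →
      dSum G ω B g ≤ dSum G ω B u := by
    intro g hg
    refine sum_le_sum fun x _ => sum_le_sum fun y _ => ?_
    split_ifs with hxy
    · exact mul_le_mul_of_nonneg_left (sq_le_sq.2 (hg x y)) (hω x y hxy).le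
    · exact le_rfl
  have h1 := sum_sq_le_of_isoperimetric G nbr hnbr ω hω B hc hd hiso (fun x => max (u x - m) 0)
    (fun x => le_max_right _ _) (by simpa using hpos)
  have h2 := sum_sq_le_of_isoperimetric G nbr hnbr ω hω B hc hd hiso (fun x => max (m - u x) 0)
    (fun x => le_max_right _ _) (by simpa using hneg)
  have e1 := mul_le_mul_of_nonneg_left (hmono (fun x => max (u x - m) 0) fun x y =>
    (abs_max_sub_max_le_abs _ _ _).trans (by simp)) hN0
  have e2 := mul_le_mul_of_nonneg_left (hmono (fun x => max (m - u x) 0) fun x y =>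
    (abs_max_sub_max_le_abs _ _ _).trans (by simp [abs_sub_comm])) hN0
  have hsum : ∑ x ∈ B, (u x - m) ^ 2 =
      ∑ x ∈ B, max (u x - m) 0 ^ 2 + ∑ x ∈ B, max (m - u x) 0 ^ 2 := by
    rw [← sum_add_distrib]
    refine sum_congr rfl fun x _ => ?_
    rcases le_total (u x) m with h | h
    · rw [max_eq_right (by linarith), max_eq_left (by linarith)]
      ring
    · rw [max_eq_left (by linarith), max_eq_right (by linarith)]
      ring
  have hfin := sum_sub_wavg_sq_le B hB u m
  have : 32 / c ^ 2 * (∑ x ∈ B, nu nbr ω x ^ (d / 2)) ^ (2 / d) * dSum G ω B u =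
    2 * (16 / c ^ 2 * (∑ x ∈ B, nu nbr ω x ^ (d / 2)) ^ (2 / d) * dSum G ω B u) := by ring
  linarith

/-- Connected graphs with volume regularity and a relative isoperimetric inequality of order `d`,
where `ball` is the family of balls of the graph distance. -/
structure IsRegularIso {V : Type*} (G : SimpleGraph V) (ball : V → ℝ → Finset V) (d : ℕ)
    (Creg Criso : ℝ) : Prop where
  connected : G.Connected
  mem_ball : ∀ (x : V) (r : ℝ) (y : V), y ∈ ball x r ↔ (G.dist x y : ℝ) ≤ r
  card_ball : ∀ (x : V) (r : ℝ), 1 ≤ r →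
    Creg⁻¹ * r ^ d ≤ (#(ball x r) : ℝ) ∧ (#(ball x r) : ℝ) ≤ Creg * r ^ d
  iso : ∀ (x : V) (r : ℝ) (A : Finset V), 1 ≤ r → A.Nonempty → A ⊆ ball x r →
    (#A : ℝ) < (#(ball x r) : ℝ) / 2 → Criso / r ≤ (#(relBdry G (ball x r) A) : ℝ) / (#A : ℝ)

lemma exists_geodesic {V : Type*} {G : SimpleGraph V} (hG : G.Connected) (z x₀ : V) :
    ∃ y : ℕ → V, y 0 = z ∧ (∀ s, G.dist (y s) (y (s + 1)) ≤ 1) ∧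
      ∀ s, G.dist (y s) x₀ ≤ G.dist z x₀ - s := by
  have hstep : ∀ v, ∃ v', G.dist v v' ≤ 1 ∧ G.dist v' x₀ ≤ G.dist v x₀ - 1 := by
    intro v
    obtain ⟨p, hp⟩ := hG.exists_walk_length_eq_dist v x₀
    cases p with
    | nil => exact ⟨x₀, by simp, by simp⟩
    | cons h q =>
      refine ⟨_, (SimpleGraph.dist_eq_one_iff_adj.2 h).le, ?_⟩
      rw [← hp, SimpleGraph.Walk.length_cons]
      simpa using SimpleGraph.dist_le q
  choose f hf1 hf2 using hstep
  refine ⟨fun s => f^[s] z, rfl, fun s => ?_, fun s => ?_⟩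
  · simp only [Function.iterate_succ_apply']
    exact hf1 _
  · induction s with
    | zero => simp
    | succ s ih =>
      have := hf2 (f^[s] z)
      simp only [Function.iterate_succ_apply'] at ih ⊢
      lia

namespace IsRegularIso

variable {V : Type*} {G : SimpleGraph V} {ball : V → ℝ → Finset V} {d : ℕ} {Creg Criso : ℝ}

lemma mem_ball_natCast (h : IsRegularIso G ball d Creg Criso) {x y : V} {s : ℕ} :
    y ∈ ball x s ↔ G.dist x y ≤ s := by
  rw [h.mem_ball]
  norm_cast

lemma one_le_Creg (h : IsRegularIso G ball d Creg Criso) (hCreg : 0 < Creg) (x : V) :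
    1 ≤ Creg := by
  have h1 := h.card_ball x 1 le_rfl
  simp only [one_pow, mul_one] at h1
  by_contra! hlt
  have : 1 < Creg⁻¹ := (one_lt_inv₀ hCreg).2 hlt
  linarith [h1.1, h1.2]

lemma relBdry_nonempty (h : IsRegularIso G ball d Creg Criso) (x₀ : V) (N : ℕ) (A : Finset V)
    (hA : A.Nonempty) (hAB : A ⊂ ball x₀ N) : (relBdry G (ball x₀ N) A).Nonempty := by
  classical
  by_contra hemp
  rw [not_nonempty_iff_eq_empty] at hemp
  have hclosed : ∀ a ∈ A, ∀ b ∈ ball x₀ N, G.dist a b ≤ 1 → b ∈ A := by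
    intro a ha b hb hab
    rcases Nat.le_one_iff_eq_zero_or_eq_one.1 hab with h0 | h1
    · rwa [← (h.connected.dist_eq_zero_iff).1 h0]
    · by_contra hbA
      have : a ∈ relBdry G (ball x₀ N) A :=
        mem_filter.2 ⟨ha, b, hb, hbA, SimpleGraph.dist_eq_one_iff_adj.1 h1⟩
      simp [hemp] at this
  have hiff : ∀ z ∈ ball x₀ N, (x₀ ∈ A ↔ z ∈ A) := by
    intro z hz
    obtain ⟨y, hy0, hy1, hy2⟩ := exists_geodesic h.connected z x₀
    rw [h.mem_ball_natCast, SimpleGraph.dist_comm] at hz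
    have hyB : ∀ s, y s ∈ ball x₀ N := by
      intro s
      rw [h.mem_ball_natCast, SimpleGraph.dist_comm]
      exact (hy2 s).trans (by lia)
    have hall : ∀ s, (y s ∈ A ↔ z ∈ A) := by
      intro s
      induction s with
      | zero => rw [hy0]
      | succ s ih =>
        rw [← ih]
        exact ⟨fun hs => hclosed _ hs _ (hyB s) (by rw [SimpleGraph.dist_comm]; exact hy1 s),
          fun hs => hclosed _ hs _ (hyB (s + 1)) (hy1 s)⟩
    have hend : y N = x₀ := by
      rw [← h.connected.dist_eq_zero_iff]
      have := hy2 N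
      lia
    rw [← hall N, hend]
  obtain ⟨a, ha⟩ := hA
  obtain ⟨b, hb, hbA⟩ := (Finset.ssubset_iff_of_subset hAB.1).1 hAB
  exact hbA ((hiff b hb).1 ((hiff a (hAB.1 ha)).2 ha))

/-- The relative isoperimetric inequality, extended to sets of exactly half the volume. -/
lemma iso_of_two_mul_card_le (h : IsRegularIso G ball d Creg Criso) (hCreg : 0 < Creg)
    (hCriso : 0 < Criso) (x₀ : V) (N : ℕ) (hN : 1 ≤ N) (A : Finset V) (hA : A.Nonempty)
    (hAB : A ⊆ ball x₀ N) (hhalf : 2 * #A ≤ #(ball x₀ N)) :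
    min 1 (Criso / (2 * (1 + Creg))) * #A ≤ N * #(relBdry G (ball x₀ N) A) := by
  classical
  have hN' : (1 : ℝ) ≤ N := by exact_mod_cast hN
  have hss : A ⊂ ball x₀ N := by
    refine hAB.ssubset_of_ne fun heq => ?_
    have := hA.card_pos
    rw [← heq] at hhalf
    lia
  obtain ⟨p, hp⟩ := h.relBdry_nonempty x₀ N A hA hss
  have hpA : p ∈ A := (mem_filter.1 hp).1
  have hbd1 : (1 : ℝ) ≤ #(relBdry G (ball x₀ N) A) := by
    exact_mod_cast card_pos.2 ⟨p, hp⟩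
  by_cases h1 : #A = 1
  · rw [h1, Nat.cast_one, mul_one]
    exact (min_le_left _ _).trans (by nlinarith)
  have hcA : 2 ≤ #A := by
    have := hA.card_pos
    lia
  have hcA' : (2 : ℝ) ≤ #A := by exact_mod_cast hcA
  have hcard : #(A.erase p) = #A - 1 := card_erase_of_mem hpA
  have hcard' : (#(A.erase p) : ℝ) = #A - 1 := by
    rw [hcard, Nat.cast_sub (by lia), Nat.cast_one]
  have hiso := h.iso x₀ N (A.erase p) hN' (card_pos.1 (by lia))
    ((erase_subset _ _).trans hAB) (by
      have : (2 : ℝ) * #A ≤ #(ball x₀ N) := by exact_mod_cast hhalf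
      linarith)
  rw [div_le_div_iff₀ (by linarith) (by linarith), hcard'] at hiso
  have hsub : relBdry G (ball x₀ N) (A.erase p) ⊆ relBdry G (ball x₀ N) A ∪ ball p 1 := by
    intro z hz
    obtain ⟨hzA, y, hyB, hyA, hzy⟩ := mem_filter.1 hz
    rw [mem_union]
    by_cases hyp : y = p
    · right
      rw [h.mem_ball, ← hyp, SimpleGraph.dist_eq_one_iff_adj.2 hzy.symm, Nat.cast_one]
    · left
      exact mem_filter.2 ⟨mem_of_mem_erase hzA, y, hyB,
        fun hy => hyA (mem_erase.2 ⟨hyp, hy⟩), hzy⟩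
  have hcb : (#(relBdry G (ball x₀ N) (A.erase p)) : ℝ) ≤
      #(relBdry G (ball x₀ N) A) + Creg := by
    have e1 : (#(relBdry G (ball x₀ N) (A.erase p)) : ℝ) ≤
        #(relBdry G (ball x₀ N) A) + #(ball p 1) := by
      exact_mod_cast (card_le_card hsub).trans (card_union_le _ _)
    have e2 := (h.card_ball p 1 le_rfl).2
    simp only [one_pow, mul_one] at e2
    linarith
  set b : ℝ := (#(relBdry G (ball x₀ N) A) : ℝ)
  calc min 1 (Criso / (2 * (1 + Creg))) * #A ≤ Criso / (2 * (1 + Creg)) * #A := by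
        gcongr
        exact min_le_right _ _
    _ = (Criso * (#A / 2)) / (1 + Creg) := by
        field_simp
    _ ≤ N * b := by
        rw [div_le_iff₀ (by positivity)]
        have e1 : Criso * (#A / 2) ≤ Criso * (#A - 1) := by
          gcongr
          linarith
        have e2 : b + Creg ≤ (1 + Creg) * b := by nlinarith
        have e3 : (#(relBdry G (ball x₀ N) (A.erase p)) : ℝ) * N ≤ (1 + Creg) * b * N := by
          gcongr
          exact hcb.trans e2
        linarith

open Classical in
/-- Around each point of a set `A` of at most half the volume of `ball x₀ N` there is a ball inside
`ball x₀ N` in which the relative boundary of `A` is of full order. -/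
lemma exists_ball_relBdry (h : IsRegularIso G ball d Creg Criso) (hd : 1 ≤ d) (hCreg : 0 < Creg)
    (hCriso : 0 < Criso) (x₀ : V) (N : ℕ) (hN : 1 ≤ N) (A : Finset V) (hAB : A ⊆ ball x₀ N)
    (hhalf : 2 * #A ≤ #(ball x₀ N)) (z : V) (hz : z ∈ A) :
    ∃ (y : V) (s : ℕ), 1 ≤ s ∧ s ≤ N ∧ z ∈ ball y s ∧ ball y s ⊆ ball x₀ N ∧
      min 1 (Criso / (2 * (1 + Creg))) / (2 * Creg ^ 3 * 2 ^ d) * (s : ℝ) ^ (d - 1) ≤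
        #(relBdry G (ball y s) (A ∩ ball y s)) := by
  have hC1 := h.one_le_Creg hCreg x₀
  obtain ⟨y, hy0, hy1, hy2⟩ := exists_geodesic h.connected z x₀
  have hzN := h.mem_ball_natCast.1 (hAB hz)
  rw [SimpleGraph.dist_comm] at hzN
  have hstep : ∀ s : ℕ, ball (y s) s ⊆ ball (y (s + 1)) (s + 1 : ℕ) := by
    intro s v hv
    rw [h.mem_ball_natCast] at hv ⊢
    have := h.connected.dist_triangle (u := y (s + 1)) (v := y s) (w := v)
    have := hy1 s
    rw [SimpleGraph.dist_comm] at this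
    lia
  have hmem : ∀ s : ℕ, z ∈ ball (y s) s := by
    intro s
    induction s with
    | zero =>
      rw [h.mem_ball_natCast, hy0]
      simp
    | succ s ih => exact hstep s ih
  have hend : y N = x₀ := by
    rw [← h.connected.dist_eq_zero_iff]
    have := hy2 N
    lia
  have hex : ∃ s : ℕ, 1 ≤ s ∧ 2 * #(A ∩ ball (y s) s) ≤ #(ball (y s) s) :=
    ⟨N, hN, by rw [hend, inter_eq_left.2 hAB]; exact hhalf⟩
  set s := Nat.find hex with hs
  obtain ⟨hs1, hs2⟩ := Nat.find_spec hex
  rw [← hs] at hs1 hs2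
  have hsN : s ≤ N := Nat.find_min' hex ⟨hN, by rw [hend, inter_eq_left.2 hAB]; exact hhalf⟩
  have hs1' : (1 : ℝ) ≤ s := by exact_mod_cast hs1
  refine ⟨y s, s, hs1, hsN, hmem s, fun v hv => ?_, ?_⟩
  · rw [h.mem_ball_natCast] at hv ⊢
    have := h.connected.dist_triangle (u := x₀) (v := y s) (w := v)
    have := hy2 s
    rw [SimpleGraph.dist_comm] at this
    lia
  have hprev : (#(ball (y s) s) : ℝ) ≤ 2 * (Creg ^ 2 * 2 ^ d) * #(A ∩ ball (y s) s) := by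
    obtain ⟨t, ht⟩ : ∃ t, s = t + 1 := ⟨s - 1, by lia⟩
    have hmono : (#(A ∩ ball (y t) t) : ℝ) ≤ #(A ∩ ball (y s) s) := by
      rw [ht]
      exact_mod_cast card_le_card (inter_subset_inter_left (hstep t))
    rcases Nat.eq_zero_or_pos t with h0 | htpos
    · have hle := (h.card_ball (y s) s hs1').2
      have hone : (1 : ℝ) ≤ #(A ∩ ball (y s) s) := by
        exact_mod_cast card_pos.2 ⟨z, mem_inter.2 ⟨hz, hmem s⟩⟩
      have hs' : (s : ℝ) = 1 := by rw [ht, h0]; simp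
      rw [hs', one_pow, mul_one] at hle
      rw [← hs'] at hle
      have h2d : (1 : ℝ) ≤ 2 ^ d := one_le_pow₀ (by norm_num)
      have e1 : Creg ≤ Creg ^ 2 * 2 ^ d := by
        nlinarith [mul_nonneg (sq_nonneg Creg) (sub_nonneg.2 h2d)]
      nlinarith [mul_nonneg (hCreg.le.trans e1) (sub_nonneg.2 hone)]
    · have hnot := Nat.find_min hex (m := t) (by lia)
      have hbig : (#(ball (y t) t) : ℝ) ≤ 2 * #(A ∩ ball (y t) t) := by
        by_contra! hcon
        exact hnot ⟨htpos, by exact_mod_cast hcon.le⟩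
      have ht1 : (1 : ℝ) ≤ t := by exact_mod_cast htpos
      have hlow := (h.card_ball (y t) t ht1).1
      rw [inv_mul_le_iff₀ hCreg] at hlow
      calc (#(ball (y s) s) : ℝ) ≤ Creg * (s : ℝ) ^ d := (h.card_ball (y s) s hs1').2
        _ ≤ Creg * (2 * t : ℝ) ^ d := by
            gcongr
            rw [ht]
            push_cast
            linarith
        _ = Creg * 2 ^ d * (t : ℝ) ^ d := by rw [mul_pow]; ring
        _ ≤ Creg * 2 ^ d * (Creg * (2 * #(A ∩ ball (y s) s))) := by
            gcongr
            exact hlow.trans (by gcongr; linarith)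
        _ = _ := by ring
  have hiso := h.iso_of_two_mul_card_le hCreg hCriso (y s) s hs1 (A ∩ ball (y s) s)
    ⟨z, mem_inter.2 ⟨hz, hmem s⟩⟩ inter_subset_right hs2
  have hlow := (h.card_ball (y s) s hs1').1
  rw [inv_mul_le_iff₀ hCreg] at hlow
  set c := min 1 (Criso / (2 * (1 + Creg)))
  have hc : 0 < c := lt_min one_pos (by positivity)
  have hpow : (s : ℝ) ^ d = s * (s : ℝ) ^ (d - 1) := by
    rw [← pow_succ', Nat.sub_add_cancel hd]
  rw [div_mul_eq_mul_div, div_le_iff₀ (by positivity)]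
  refine le_of_mul_le_mul_left ?_ (by linarith : (0 : ℝ) < s)
  calc (s : ℝ) * (c * (s : ℝ) ^ (d - 1)) = c * (s : ℝ) ^ d := by rw [hpow]; ring
    _ ≤ c * (Creg * (2 * (Creg ^ 2 * 2 ^ d) * #(A ∩ ball (y s) s))) := by
        gcongr
        exact hlow.trans (by gcongr)
    _ = 2 * Creg ^ 3 * 2 ^ d * (c * #(A ∩ ball (y s) s)) := by ring
    _ ≤ 2 * Creg ^ 3 * 2 ^ d * (s * #(relBdry G (ball (y s) s) (A ∩ ball (y s) s))) := by gcongr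
    _ = _ := by ring

/-- The isoperimetric inequality of order `d` inside balls. -/
theorem isoperimetric (h : IsRegularIso G ball d Creg Criso) (hd : 2 ≤ d) (hCreg : 0 < Creg)
    (hCriso : 0 < Criso) (x₀ : V) (N : ℕ) (hN : 1 ≤ N) (A : Finset V) (hAB : A ⊆ ball x₀ N)
    (hhalf : 2 * #A ≤ #(ball x₀ N)) :
    min 1 (Criso / (2 * (1 + Creg))) / (2 * Creg ^ 3 * 2 ^ d) /
      (Creg * 5 ^ d) ^ (((d : ℝ) - 1) / d) * (#A : ℝ) ^ (((d : ℝ) - 1) / d) ≤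
      #(relBdry G (ball x₀ N) A) := by
  classical
  have hexists := h.exists_ball_relBdry (by lia) hCreg hCriso x₀ N hN A hAB hhalf
  have : ∃ (y : V → V) (s : V → ℕ), ∀ z ∈ A, 1 ≤ s z ∧ s z ≤ N ∧ z ∈ ball (y z) (s z) ∧
      ball (y z) (s z) ⊆ ball x₀ N ∧
      min 1 (Criso / (2 * (1 + Creg))) / (2 * Creg ^ 3 * 2 ^ d) * (s z : ℝ) ^ (d - 1) ≤
        #(relBdry G (ball (y z) (s z)) (A ∩ ball (y z) (s z))) := by
    choose! y s hys using hexists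
    exact ⟨y, s, hys⟩
  obtain ⟨y, s, hys⟩ := this
  set κ := min 1 (Criso / (2 * (1 + Creg))) / (2 * Creg ^ 3 * 2 ^ d) with hκdef
  have hκ : 0 < κ := div_pos (lt_min one_pos (by positivity)) (by positivity)
  set θ : ℝ := ((d : ℝ) - 1) / d with hθ
  have hd2 : (2 : ℝ) ≤ d := by exact_mod_cast hd
  have hθ0 : 0 < θ := div_pos (by linarith) (by linarith)
  have hθ1 : θ ≤ 1 := by
    rw [hθ, div_le_one (by linarith)]
    linarith
  let D : V → Finset V := fun z => ball (y z) (s z)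
  obtain ⟨U, hUA, hdisj, hcov⟩ := Vitali.exists_disjoint_subfamily_covering_enlargement
    (fun z => (D z : Set V)) (A : Set V) (fun z => (s z : ℝ)) 2 (by norm_num)
    (fun z _ => Nat.cast_nonneg _) N (fun z hz => by exact_mod_cast (hys z hz).2.1)
    (fun z hz => ⟨z, (hys z hz).2.2.1⟩)
  lift U to Finset V using A.finite_toSet.subset hUA
  have hUA' : U ⊆ A := by exact_mod_cast hUA
  have hcover : A ⊆ U.biUnion fun b => ball (y b) (5 * s b : ℕ) := by
    intro a ha
    obtain ⟨b, hb, ⟨v, hva, hvb⟩, hsab⟩ := hcov a ha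
    refine mem_biUnion.2 ⟨b, hb, ?_⟩
    have hsab' : s a ≤ 2 * s b := by exact_mod_cast hsab
    have h1 := h.mem_ball_natCast.1 (hys a ha).2.2.1
    have h2 := h.mem_ball_natCast.1 (mem_coe.1 hva)
    have h3 := h.mem_ball_natCast.1 (mem_coe.1 hvb)
    rw [h.mem_ball_natCast]
    have t1 := h.connected.dist_triangle (u := y b) (v := v) (w := a)
    have t2 := h.connected.dist_triangle (u := v) (v := y a) (w := a)
    rw [SimpleGraph.dist_comm (u := v) (v := y a)] at t2
    lia
  have hvol : (#A : ℝ) ≤ Creg * 5 ^ d * ∑ b ∈ U, (s b : ℝ) ^ d := by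
    calc (#A : ℝ) ≤ ∑ b ∈ U, (#(ball (y b) (5 * s b : ℕ)) : ℝ) := by
          exact_mod_cast (card_le_card hcover).trans card_biUnion_le
      _ ≤ ∑ b ∈ U, Creg * 5 ^ d * (s b : ℝ) ^ d := by
          refine sum_le_sum fun b hb => ?_
          have hsb : (1 : ℝ) ≤ s b := by exact_mod_cast (hys b (hUA' hb)).1
          refine (h.card_ball (y b) _ (by push_cast; linarith)).2.trans (le_of_eq ?_)
          push_cast
          rw [mul_pow]
          ring
      _ = _ := by rw [mul_sum]
  have hbdry : ∑ b ∈ U, #(relBdry G (D b) (A ∩ D b)) ≤ #(relBdry G (ball x₀ N) A) := by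
    rw [← card_biUnion]
    · refine card_le_card fun v hv => ?_
      obtain ⟨b, hb, hvb⟩ := mem_biUnion.1 hv
      obtain ⟨hvA, w, hwD, hwA, hvw⟩ := mem_filter.1 hvb
      exact mem_filter.2 ⟨(mem_inter.1 hvA).1, w, (hys b (hUA' hb)).2.2.2.1 hwD,
        fun hw => hwA (mem_inter.2 ⟨hw, hwD⟩), hvw⟩
    · intro a ha b hb hab
      have hD : Disjoint (D a) (D b) := disjoint_coe.1 (hdisj ha hb hab)
      exact hD.mono ((filter_subset _ _).trans inter_subset_right)
        ((filter_subset _ _).trans inter_subset_right)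
  have hsub : (∑ b ∈ U, (s b : ℝ) ^ d) ^ θ ≤ ∑ b ∈ U, (s b : ℝ) ^ (d - 1) := by
    refine (rpow_sum_le_sum_rpow U _ (fun b _ => by positivity) hθ0 hθ1).trans (le_of_eq ?_)
    refine sum_congr rfl fun b _ => ?_
    rw [← Real.rpow_natCast, ← Real.rpow_mul (Nat.cast_nonneg _), ← Real.rpow_natCast]
    congr 1
    rw [hθ, Nat.cast_sub (by lia), Nat.cast_one]
    field_simp
  have hM : 0 < (Creg * 5 ^ d) ^ θ := Real.rpow_pos_of_pos (by positivity) _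
  rw [div_mul_eq_mul_div, div_le_iff₀ hM]
  calc κ * (#A : ℝ) ^ θ ≤ κ * (Creg * 5 ^ d * ∑ b ∈ U, (s b : ℝ) ^ d) ^ θ := by gcongr
    _ = κ * (∑ b ∈ U, (s b : ℝ) ^ d) ^ θ * (Creg * 5 ^ d) ^ θ := by
        rw [Real.mul_rpow (by positivity) (by positivity)]
        ring
    _ ≤ (∑ b ∈ U, κ * (s b : ℝ) ^ (d - 1)) * (Creg * 5 ^ d) ^ θ := by
        rw [← mul_sum]
        gcongr
    _ ≤ (∑ b ∈ U, (#(relBdry G (D b) (A ∩ D b)) : ℝ)) * (Creg * 5 ^ d) ^ θ := by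
        gcongr with b hb
        exact (hys b (hUA' hb)).2.2.2.2
    _ ≤ #(relBdry G (ball x₀ N) A) * (Creg * 5 ^ d) ^ θ := by
        gcongr
        exact_mod_cast hbdry

end IsRegularIso

end RCM

open RCM in
/-- **Local Poincaré inequality.** -/
theorem local_poincare_inequality
    (d : ℕ) (hd : 2 ≤ d) (Creg Criso : ℝ) (hCreg : 0 < Creg) (hCriso : 0 < Criso) :
    ∃ CPI : ℝ, 0 < CPI ∧
      ∀ (V : Type) (G : SimpleGraph V) (nbr : V → Finset V)
        (_ : ∀ x y, y ∈ nbr x ↔ G.Adj x y)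
        (_ : Infinite V) (_ : G.Connected)
        (ball : V → ℝ → Finset V)
        (_ : ∀ (x : V) (r : ℝ) (y : V), y ∈ ball x r ↔ (G.dist x y : ℝ) ≤ r)
        (_ : ∀ (x : V) (r : ℝ), 1 ≤ r →
              Creg⁻¹ * r ^ d ≤ ((ball x r).card : ℝ) ∧ ((ball x r).card : ℝ) ≤ Creg * r ^ d)
        (_ : ∀ (x : V) (r : ℝ) (A : Finset V), 1 ≤ r → A.Nonempty → A ⊆ ball x r →
              (A.card : ℝ) < ((ball x r).card : ℝ) / 2 →
              Criso / r ≤ ((RCM.relBdry G (ball x r) A).card : ℝ) / (A.card : ℝ))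
        (ω : V → V → ℝ)
        (_ : ∀ x y, ω x y = ω y x)
        (_ : ∀ x y, G.Adj x y → 0 < ω x y)
        (_ : ∀ x y, ¬ G.Adj x y → ω x y = 0)
        (x₀ : V) (n : ℝ) (_ : 1 ≤ n) (u : V → ℝ),
        nrm (ball x₀ n) 2 (fun x => u x - wavg (ball x₀ n) (fun _ => 1) u) ^ 2 ≤
          CPI * nrm (ball x₀ n) ((d : ℝ) / 2) (nu nbr ω) *
            (n ^ 2 / ((ball x₀ n).card : ℝ)) * dSum G ω (ball x₀ n) u := by
  set c : ℝ := min 1 (Criso / (2 * (1 + Creg))) / (2 * Creg ^ 3 * 2 ^ d) /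
    (Creg * 5 ^ d) ^ (((d : ℝ) - 1) / d) with hcdef
  have hc : 0 < c := div_pos (div_pos (lt_min one_pos (by positivity)) (by positivity))
    (Real.rpow_pos_of_pos (by positivity) _)
  have hd2 : (2 : ℝ) ≤ d := by exact_mod_cast hd
  have hCp : 0 < Creg ^ (2 / (d : ℝ)) := Real.rpow_pos_of_pos hCreg _
  refine ⟨32 / c ^ 2 * Creg ^ (2 / (d : ℝ)), by positivity, ?_⟩
  intro V G nbr hnbr _ hconn ball hball hvol hiso ω _ hω _ x₀ n hn u
  have h : IsRegularIso G ball d Creg Criso := ⟨hconn, hball, hvol, hiso⟩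
  have hfloor : ball x₀ n = ball x₀ (⌊n⌋₊ : ℕ) := by
    ext v
    rw [h.mem_ball_natCast, hball, Nat.le_floor_iff (by linarith)]
  have hN : 1 ≤ ⌊n⌋₊ := Nat.le_floor (by exact_mod_cast hn)
  have hB : (ball x₀ n).Nonempty := ⟨x₀, by rw [hball]; simp; linarith⟩
  have hcard : (0 : ℝ) < #(ball x₀ n) := by exact_mod_cast hB.card_pos
  have hν : ∀ x, 0 ≤ nu nbr ω x := fun x =>
    sum_nonneg fun y hy => inv_nonneg.2 (hω x y ((hnbr x y).1 hy)).le
  have hmain := sum_sub_wavg_sq_le_of_isoperimetric G nbr hnbr ω hω (ball x₀ n) hB hc hd2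
    (fun S hS _ hhalf => by
      rw [hfloor] at hS hhalf ⊢
      exact h.isoperimetric hd hCreg hCriso x₀ _ hN S hS hhalf) u
  have hE0 : 0 ≤ dSum G ω (ball x₀ n) u := by
    refine sum_nonneg fun x _ => sum_nonneg fun y _ => ?_
    split_ifs with hxy
    · have := hω x y hxy
      positivity
    · exact le_rfl
  have hS0 : 0 ≤ ∑ x ∈ ball x₀ n, nu nbr ω x ^ ((d : ℝ) / 2) :=
    sum_nonneg fun x _ => Real.rpow_nonneg (hν x) _
  have hleft : nrm (ball x₀ n) 2 (fun x => u x - wavg (ball x₀ n) (fun _ => 1) u) ^ 2 =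
      (#(ball x₀ n) : ℝ)⁻¹ * ∑ x ∈ ball x₀ n, (u x - wavg (ball x₀ n) (fun _ => 1) u) ^ 2 := by
    have h0 : 0 ≤ (#(ball x₀ n) : ℝ)⁻¹ *
        ∑ x ∈ ball x₀ n, (u x - wavg (ball x₀ n) (fun _ => 1) u) ^ 2 := by positivity
    simp only [nrm, Real.rpow_two, sq_abs]
    rw [← Real.sqrt_eq_rpow, Real.sq_sqrt h0]
  have hnu : nrm (ball x₀ n) ((d : ℝ) / 2) (nu nbr ω) =
      (∑ x ∈ ball x₀ n, nu nbr ω x ^ ((d : ℝ) / 2)) ^ (2 / (d : ℝ)) /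
        (#(ball x₀ n) : ℝ) ^ (2 / (d : ℝ)) := by
    simp only [nrm, abs_of_nonneg (hν _), one_div_div]
    rw [inv_mul_eq_div, Real.div_rpow hS0 hcard.le]
  set P := (∑ x ∈ ball x₀ n, nu nbr ω x ^ ((d : ℝ) / 2)) ^ (2 / (d : ℝ))
  have hP0 : 0 ≤ P := Real.rpow_nonneg hS0 _
  have hQ : 0 < (#(ball x₀ n) : ℝ) ^ (2 / (d : ℝ)) := Real.rpow_pos_of_pos hcard _
  have hscale : (#(ball x₀ n) : ℝ) ^ (2 / (d : ℝ)) ≤ Creg ^ (2 / (d : ℝ)) * n ^ 2 := by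
    calc (#(ball x₀ n) : ℝ) ^ (2 / (d : ℝ)) ≤ (Creg * n ^ d) ^ (2 / (d : ℝ)) := by
          gcongr
          exact (hvol x₀ n hn).2
      _ = Creg ^ (2 / (d : ℝ)) * n ^ 2 := by
          rw [Real.mul_rpow hCreg.le (by positivity), ← Real.rpow_natCast,
            ← Real.rpow_mul (by linarith), mul_div_cancel₀ _ (by linarith), Real.rpow_two]
  rw [hleft, hnu]
  calc (#(ball x₀ n) : ℝ)⁻¹ * ∑ x ∈ ball x₀ n, (u x - wavg (ball x₀ n) (fun _ => 1) u) ^ 2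
      ≤ (#(ball x₀ n) : ℝ)⁻¹ * (32 / c ^ 2 * P * dSum G ω (ball x₀ n) u) := by gcongr
    _ = 32 / c ^ 2 * P * dSum G ω (ball x₀ n) u / #(ball x₀ n) * 1 := by
        rw [inv_mul_eq_div, mul_one]
    _ ≤ 32 / c ^ 2 * P * dSum G ω (ball x₀ n) u / #(ball x₀ n) *
          (Creg ^ (2 / (d : ℝ)) * n ^ 2 / (#(ball x₀ n) : ℝ) ^ (2 / (d : ℝ))) := by
        gcongr
        exact (one_le_div hQ).2 hscale
    _ = _ := by
        field_simp
end
end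

section
/- There is a universal constant C₂ < ∞ such that the following holds. Let B ⊂ V be a finite connected set, let η : V → ℝ satisfy η = 0 outside B, 0 ≤ η ≤ 1 and η ≡ 0 on ∂B, and let u : V → (0,∞) satisfy (L_Y^ω u)(x) ≥ 0 for all x ∈ B. Then for every α ≥ 1: E^ω_{η²}(u^α)/|B| ≤ C₂·(α⁴/(2α−1)²)·‖∇η‖²_{ℓ∞(E)}·‖u^{2α}‖_{1,B,μ^ω}. -/
open Finset MeasureTheory
open scoped ENNReal

noncomputable section

namespace RCM

/-- Bernoulli's inequality: `b^α - a^α ≤ α b^(α-1) (b - a)`. -/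
lemma rpow_sub_rpow_le {a b α : ℝ} (ha : 0 < a) (hb : 0 < b) (hα : 1 ≤ α) :
    b ^ α - a ^ α ≤ α * b ^ (α - 1) * (b - a) := by
  have hbern := one_add_mul_self_le_rpow_one_add (s := a / b - 1)
    (by linarith [div_pos ha hb]) hα
  rw [add_sub_cancel, Real.div_rpow ha.le hb.le, le_div_iff₀ (Real.rpow_pos_of_pos hb α)] at hbern
  have hsplit : b ^ α = b ^ (α - 1) * b := by
    rw [← Real.rpow_add_one hb.ne']
    congr 1
    ring
  have hdiv : a / b * b = a := div_mul_cancel₀ a hb.ne'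
  have hexpand : (1 + α * (a / b - 1)) * b ^ α = b ^ α - α * b ^ (α - 1) * (b - a) := by
    rw [hsplit]
    linear_combination α * b ^ (α - 1) * hdiv
  linarith

lemma rpow_comparison_of_le {a b α : ℝ} (ha : 0 < a) (hab : a ≤ b) (hα : 1 ≤ α) :
    (b ^ α - a ^ α) ^ 2 ≤ α * ((b ^ (2 * α - 1) - a ^ (2 * α - 1)) * (b - a)) ∧
      (b - a) * (b ^ (2 * α - 1) + a ^ (2 * α - 1)) ≤ 2 * (b ^ α - a ^ α) * (b ^ α + a ^ α) := by
  have hb : 0 < b := ha.trans_le hab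
  have hbern := rpow_sub_rpow_le ha hb hα
  have hpow : ∀ c : ℝ, 0 < c → c ^ α = c ^ (α - 1) * c ∧
      c ^ (2 * α - 1) = c ^ (α - 1) * c ^ α := fun c hc => by
    constructor
    · rw [← Real.rpow_add_one hc.ne']
      congr 1
      ring
    · rw [← Real.rpow_add hc]
      congr 1
      ring
  have hmono : a ^ (α - 1) ≤ b ^ (α - 1) := Real.rpow_le_rpow ha.le hab (by linarith)
  have hmono' : a ^ α ≤ b ^ α := Real.rpow_le_rpow ha.le hab (by linarith)
  have haα : 0 < a ^ α := Real.rpow_pos_of_pos ha α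
  have hbα : 0 < b ^ α := Real.rpow_pos_of_pos hb α
  have hbα' : 0 < b ^ (α - 1) := Real.rpow_pos_of_pos hb _
  have hD : 0 ≤ b - a := by linarith
  have hlin : b ^ (α - 1) * (b - a) ≤ b ^ α - a ^ α := by
    have := mul_le_mul_of_nonneg_right hmono ha.le
    rw [(hpow a ha).1, (hpow b hb).1]
    linarith
  have hcross : a ^ (α - 1) * a ^ α ≤ b ^ (α - 1) * a ^ α :=
    mul_le_mul_of_nonneg_right hmono haα.le
  rw [(hpow a ha).2, (hpow b hb).2]
  constructor
  · calc (b ^ α - a ^ α) ^ 2 ≤ (α * b ^ (α - 1) * (b - a)) * (b ^ α - a ^ α) := by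
          rw [sq]
          exact mul_le_mul_of_nonneg_right hbern (by linarith)
      _ = α * ((b ^ (α - 1) * b ^ α - b ^ (α - 1) * a ^ α) * (b - a)) := by ring
      _ ≤ _ := by gcongr
  · calc (b - a) * (b ^ (α - 1) * b ^ α + a ^ (α - 1) * a ^ α)
        ≤ (b - a) * (b ^ (α - 1) * b ^ α + b ^ (α - 1) * a ^ α) := by gcongr
      _ = (b ^ (α - 1) * (b - a)) * (b ^ α + a ^ α) := by ring
      _ ≤ (b ^ α - a ^ α) * (b ^ α + a ^ α) := by gcongr
      _ ≤ _ := by nlinarith [mul_nonneg (sub_nonneg.2 hmono') (add_pos hbα haα).le]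

lemma rpow_comparison {a b α : ℝ} (ha : 0 < a) (hb : 0 < b) (hα : 1 ≤ α) :
    (b ^ α - a ^ α) ^ 2 ≤ α * ((b ^ (2 * α - 1) - a ^ (2 * α - 1)) * (b - a)) ∧
      |b - a| * (b ^ (2 * α - 1) + a ^ (2 * α - 1)) ≤
        2 * |b ^ α - a ^ α| * (b ^ α + a ^ α) := by
  rcases le_total a b with hab | hab
  · have hmono : a ^ α ≤ b ^ α := Real.rpow_le_rpow ha.le hab (by linarith)
    rw [abs_of_nonneg (sub_nonneg.2 hab), abs_of_nonneg (sub_nonneg.2 hmono)]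
    exact rpow_comparison_of_le ha hab hα
  · have hmono : b ^ α ≤ a ^ α := Real.rpow_le_rpow hb.le hab (by linarith)
    rw [abs_of_nonpos (sub_nonpos.2 hab), abs_of_nonpos (sub_nonpos.2 hmono)]
    obtain ⟨h₁, h₂⟩ := rpow_comparison_of_le hb hab hα
    constructor <;> linarith

/-- Edgewise Caccioppoli inequality, with cutoff values `p, q` at the endpoints of an edge. -/
lemma edge_caccioppoli {a b α p q g : ℝ} (ha : 0 < a) (hb : 0 < b) (hα : 1 ≤ α)
    (hp : 0 ≤ p) (hq : 0 ≤ q) (hg : |q - p| ≤ g) :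
    (p ^ 2 + q ^ 2) * (b ^ α - a ^ α) ^ 2 ≤
      4 * α * ((q ^ 2 * b ^ (2 * α - 1) - p ^ 2 * a ^ (2 * α - 1)) * (b - a)) +
        16 * α ^ 2 * g ^ 2 * ((a ^ α) ^ 2 + (b ^ α) ^ 2) := by
  obtain ⟨h₁, h₂⟩ := rpow_comparison ha hb hα
  have haα : 0 < a ^ α := Real.rpow_pos_of_pos ha α
  have hbα : 0 < b ^ α := Real.rpow_pos_of_pos hb α
  have haQ : 0 < a ^ (2 * α - 1) := Real.rpow_pos_of_pos ha _
  have hbQ : 0 < b ^ (2 * α - 1) := Real.rpow_pos_of_pos hb _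
  generalize a ^ α = A at *
  generalize b ^ α = B at *
  generalize a ^ (2 * α - 1) = P at *
  generalize b ^ (2 * α - 1) = Q at *
  have hg0 : 0 ≤ g := (abs_nonneg _).trans hg
  have hcross : -((q ^ 2 - p ^ 2) * (b - a) * (Q + P)) ≤
      2 * (g * (q + p) * |B - A| * (B + A)) := by
    calc -((q ^ 2 - p ^ 2) * (b - a) * (Q + P))
        ≤ |(q ^ 2 - p ^ 2) * (b - a) * (Q + P)| := neg_le_abs _
      _ = |q - p| * (q + p) * (|b - a| * (Q + P)) := by
        rw [show (q ^ 2 - p ^ 2) * (b - a) * (Q + P) = (q - p) * (q + p) * ((b - a) * (Q + P)) by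
          ring, abs_mul, abs_mul, abs_mul, abs_of_nonneg (add_nonneg hq hp),
          abs_of_pos (add_pos hbQ haQ)]
      _ ≤ g * (q + p) * (2 * |B - A| * (B + A)) := by gcongr
      _ = _ := by ring
  have hyoung : 8 * α * (((q + p) * |B - A|) * (g * (B + A))) ≤
      (p ^ 2 + q ^ 2) * (B - A) ^ 2 * 2 + 32 * α ^ 2 * g ^ 2 * (A ^ 2 + B ^ 2) := by
    have hX : ((q + p) * |B - A|) ^ 2 ≤ 2 * ((p ^ 2 + q ^ 2) * (B - A) ^ 2) := by
      rw [mul_pow, sq_abs, ← mul_assoc]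
      gcongr
      nlinarith [sq_nonneg (q - p)]
    have hY : (α * (g * (B + A))) ^ 2 ≤ 2 * (α ^ 2 * g ^ 2 * (A ^ 2 + B ^ 2)) := by
      calc (α * (g * (B + A))) ^ 2 = α ^ 2 * g ^ 2 * (B + A) ^ 2 := by ring
        _ ≤ α ^ 2 * g ^ 2 * (2 * (A ^ 2 + B ^ 2)) := by
          gcongr
          nlinarith [sq_nonneg (B - A)]
        _ = _ := by ring
    nlinarith [sq_nonneg ((q + p) * |B - A| - 4 * (α * (g * (B + A))))]
  have hdiag := mul_le_mul_of_nonneg_left h₁ (by positivity : 0 ≤ p ^ 2 + q ^ 2)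
  have hcross' := mul_le_mul_of_nonneg_left hcross (by linarith : 0 ≤ α)
  nlinarith

lemma abs_sub_le_gradSup {V : Type*} {G : SimpleGraph V} {η : V → ℝ}
    (hη : ∀ x, 0 ≤ η x ∧ η x ≤ 1) {x y : V} (hxy : G.Adj x y) :
    |η y - η x| ≤ gradSup G η := by
  refine le_csSup ⟨1, ?_⟩ ⟨x, y, hxy, rfl⟩
  rintro r ⟨v, w, -, rfl⟩
  rw [abs_le]
  constructor <;> linarith [hη v, hη w]

lemma sum_weight_nonneg_of_lap_nonneg {V : Type*} {G : SimpleGraph V} {nbr : V → Finset V}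
    (hnbr : ∀ x y, y ∈ nbr x ↔ G.Adj x y) {ω : V → V → ℝ}
    (hpos : ∀ x y, G.Adj x y → 0 < ω x y) {u : V → ℝ} {x : V} (hx : 0 ≤ lap nbr ω u x) :
    0 ≤ ∑ y ∈ nbr x, ω x y * (u y - u x) := by
  rcases (nbr x).eq_empty_or_nonempty with h | h
  · simp [h]
  · have hmu : 0 < mu nbr ω x := sum_pos (fun y hy => hpos x y ((hnbr x y).1 hy)) h
    exact (mul_nonneg_iff_of_pos_left (inv_pos.2 hmu)).1 hx

/-- The edges leaving `B` carry no weight after multiplication by the cutoff. -/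
lemma cutoff_mul_weight_eq_zero {V : Type*} {G : SimpleGraph V} {ω : V → V → ℝ}
    (hzero : ∀ x y, ¬ G.Adj x y → ω x y = 0) {B : Finset V} {η : V → ℝ}
    (hout : ∀ x ∉ B, η x = 0) (hbdry : ∀ x ∈ intBdry G B, η x = 0)
    (x : V) {y : V} (hy : y ∉ B) : η x * ω x y = 0 := by
  by_cases hx : x ∈ B
  · by_cases hxy : G.Adj x y
    · rw [hbdry x (by classical exact mem_filter.2 ⟨hx, y, hy, hxy⟩), zero_mul]
    · rw [hzero x y hxy, mul_zero]
  · rw [hout x hx, zero_mul]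

lemma energySq_eq_sum {V : Type*} {ω : V → V → ℝ} {B : Finset V} {η : V → ℝ}
    (hout : ∀ x ∉ B, η x = 0) (hcut : ∀ x, ∀ y ∉ B, η x * ω x y = 0) (f : V → ℝ) :
    energySq ω η f = 1 / 2 * ∑ x ∈ B, ∑ y ∈ B, η x ^ 2 * ω x y * (f y - f x) ^ 2 := by
  rw [energySq, tsum_eq_sum (s := B) fun x hx => by simp [hout x hx]]
  congr 1
  refine sum_congr rfl fun x _ => tsum_eq_sum fun y hy => ?_
  linear_combination η x * (f y - f x) ^ 2 * hcut x y hy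

/-- Testing subharmonicity against `η² ψ` with `ψ ≥ 0`. -/
lemma sum_cutoff_test_nonneg {V : Type*} {G : SimpleGraph V} {nbr : V → Finset V}
    (hnbr : ∀ x y, y ∈ nbr x ↔ G.Adj x y) {ω : V → V → ℝ}
    (hpos : ∀ x y, G.Adj x y → 0 < ω x y) (hzero : ∀ x y, ¬ G.Adj x y → ω x y = 0)
    {B : Finset V} {η : V → ℝ} (hcut : ∀ x, ∀ y ∉ B, η x * ω x y = 0)
    {u ψ : V → ℝ} (hψ : ∀ x, 0 ≤ ψ x) (hlap : ∀ x ∈ B, 0 ≤ lap nbr ω u x) :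
    0 ≤ ∑ x ∈ B, ∑ y ∈ B, ω x y * (η x ^ 2 * ψ x * (u y - u x)) := by
  classical
  refine sum_nonneg fun x hx => ?_
  have hB : ∑ y ∈ B, ω x y * (η x ^ 2 * ψ x * (u y - u x)) =
      ∑ y ∈ B ∪ nbr x, ω x y * (η x ^ 2 * ψ x * (u y - u x)) :=
    sum_subset subset_union_left fun y _ hy => by
      linear_combination η x * ψ x * (u y - u x) * hcut x y hy
  have hN : ∑ y ∈ nbr x, ω x y * (η x ^ 2 * ψ x * (u y - u x)) =
      ∑ y ∈ B ∪ nbr x, ω x y * (η x ^ 2 * ψ x * (u y - u x)) :=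
    sum_subset subset_union_right fun y _ hy => by
      rw [hzero x y fun h => hy ((hnbr x y).2 h), zero_mul]
  rw [hB, ← hN]
  have hfactor : ∑ y ∈ nbr x, ω x y * (η x ^ 2 * ψ x * (u y - u x)) =
      η x ^ 2 * ψ x * ∑ y ∈ nbr x, ω x y * (u y - u x) := by
    rw [mul_sum]
    exact sum_congr rfl fun y _ => by ring
  rw [hfactor]
  exact mul_nonneg (mul_nonneg (sq_nonneg _) (hψ x))
    (sum_weight_nonneg_of_lap_nonneg hnbr hpos (hlap x hx))

/-- Symmetrization of a double sum with symmetric weights. -/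
lemma sum_sum_symm_weight {V : Type*} {ω : V → V → ℝ} (hsymm : ∀ x y, ω x y = ω y x)
    (B : Finset V) (F : V → V → ℝ) :
    ∑ x ∈ B, ∑ y ∈ B, ω x y * (F x y + F y x) = 2 * ∑ x ∈ B, ∑ y ∈ B, ω x y * F x y := by
  have hswap : ∑ x ∈ B, ∑ y ∈ B, ω x y * F y x = ∑ x ∈ B, ∑ y ∈ B, ω x y * F x y := by
    rw [sum_comm]
    exact sum_congr rfl fun x _ => sum_congr rfl fun y _ => by rw [hsymm]
  simp only [mul_add, sum_add_distrib, hswap]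
  ring

lemma sum_weight_le_mu {V : Type*} {G : SimpleGraph V} {nbr : V → Finset V}
    (hnbr : ∀ x y, y ∈ nbr x ↔ G.Adj x y) {ω : V → V → ℝ}
    (hpos : ∀ x y, G.Adj x y → 0 < ω x y) (hzero : ∀ x y, ¬ G.Adj x y → ω x y = 0)
    (B : Finset V) (x : V) : ∑ y ∈ B, ω x y ≤ mu nbr ω x := by
  classical
  have hN : mu nbr ω x = ∑ y ∈ B ∪ nbr x, ω x y :=
    sum_subset subset_union_right fun y _ hy => hzero x y fun h => hy ((hnbr x y).2 h)
  rw [hN]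
  refine sum_le_sum_of_subset_of_nonneg subset_union_left fun y _ _ => ?_
  by_cases h : G.Adj x y
  · exact (hpos x y h).le
  · exact (hzero x y h).ge

lemma energySq_rpow_le {V : Type*} {G : SimpleGraph V} {nbr : V → Finset V}
    (hnbr : ∀ x y, y ∈ nbr x ↔ G.Adj x y) {ω : V → V → ℝ} (hsymm : ∀ x y, ω x y = ω y x)
    (hpos : ∀ x y, G.Adj x y → 0 < ω x y) (hzero : ∀ x y, ¬ G.Adj x y → ω x y = 0)
    {B : Finset V} {η : V → ℝ} (hout : ∀ x ∉ B, η x = 0) (hη : ∀ x, 0 ≤ η x ∧ η x ≤ 1)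
    (hbdry : ∀ x ∈ intBdry G B, η x = 0) {u : V → ℝ} (hu : ∀ x, 0 < u x)
    (hlap : ∀ x ∈ B, 0 ≤ lap nbr ω u x) {α : ℝ} (hα : 1 ≤ α) :
    energySq ω η (fun x => u x ^ α) ≤
      8 * α ^ 2 * gradSup G η ^ 2 * ∑ x ∈ B, (u x ^ α) ^ 2 * mu nbr ω x := by
  have hcut : ∀ x, ∀ y ∉ B, η x * ω x y = 0 := fun x _ hy =>
    cutoff_mul_weight_eq_zero hzero hout hbdry x hy
  set g := gradSup G η
  have hedge : ∀ x y, ω x y * (η x ^ 2 * (u y ^ α - u x ^ α) ^ 2 +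
        η y ^ 2 * (u x ^ α - u y ^ α) ^ 2) ≤
      16 * α ^ 2 * g ^ 2 * (ω x y * ((u x ^ α) ^ 2 + (u y ^ α) ^ 2)) -
        4 * α * (ω x y * (η x ^ 2 * u x ^ (2 * α - 1) * (u y - u x) +
          η y ^ 2 * u y ^ (2 * α - 1) * (u x - u y))) := by
    intro x y
    by_cases h : G.Adj x y
    · have := mul_le_mul_of_nonneg_left (edge_caccioppoli (hu x) (hu y) hα (hη x).1 (hη y).1
        (abs_sub_le_gradSup hη h)) (hpos x y h).le
      linarith
    · simp [hzero x y h]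
  have hsum := sum_le_sum fun x (_ : x ∈ B) => sum_le_sum fun y (_ : y ∈ B) => hedge x y
  simp only [sum_sub_distrib, ← mul_sum] at hsum
  rw [sum_sum_symm_weight hsymm B fun x y => η x ^ 2 * (u y ^ α - u x ^ α) ^ 2,
    sum_sum_symm_weight hsymm B fun x _ => (u x ^ α) ^ 2,
    sum_sum_symm_weight hsymm B fun x y => η x ^ 2 * u x ^ (2 * α - 1) * (u y - u x)] at hsum
  have htest := sum_cutoff_test_nonneg hnbr hpos hzero hcut (u := u)
    (ψ := fun x => u x ^ (2 * α - 1)) (fun x => (Real.rpow_pos_of_pos (hu x) _).le) hlap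
  have hmass : ∑ x ∈ B, ∑ y ∈ B, ω x y * (u x ^ α) ^ 2 ≤
      ∑ x ∈ B, (u x ^ α) ^ 2 * mu nbr ω x := sum_le_sum fun x _ => by
    rw [← sum_mul, mul_comm]
    exact mul_le_mul_of_nonneg_left (sum_weight_le_mu hnbr hpos hzero B x) (sq_nonneg _)
  have hen : energySq ω η (fun x => u x ^ α) =
      1 / 2 * ∑ x ∈ B, ∑ y ∈ B, ω x y * (η x ^ 2 * (u y ^ α - u x ^ α) ^ 2) := by
    rw [energySq_eq_sum hout hcut]
    congr 1
    exact sum_congr rfl fun x _ => sum_congr rfl fun y _ => by ring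
  have hmass' := mul_le_mul_of_nonneg_left hmass (by positivity : 0 ≤ 8 * α ^ 2 * g ^ 2)
  have htest' := mul_nonneg (by linarith : 0 ≤ α) htest
  rw [hen]
  linarith

end RCM

open RCM in
/-- **Energy estimate for subharmonic functions** (Lemma 3.2). -/
theorem energy_estimate_subharmonic :
    ∃ C₂ : ℝ, 0 < C₂ ∧
      ∀ (V : Type) (G : SimpleGraph V) (nbr : V → Finset V)
        (_ : ∀ x y, y ∈ nbr x ↔ G.Adj x y)
        (ω : V → V → ℝ)
        (_ : ∀ x y, ω x y = ω y x)
        (_ : ∀ x y, G.Adj x y → 0 < ω x y)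
        (_ : ∀ x y, ¬ G.Adj x y → ω x y = 0)
        (B : Finset V) (_ : (G.induce (B : Set V)).Connected)
        (η : V → ℝ)
        (_ : ∀ x ∉ B, η x = 0)
        (_ : ∀ x, 0 ≤ η x ∧ η x ≤ 1)
        (_ : ∀ x ∈ intBdry G B, η x = 0)
        (u : V → ℝ) (_ : ∀ x, 0 < u x)
        (_ : ∀ x ∈ B, 0 ≤ lap nbr ω u x)
        (α : ℝ) (_ : 1 ≤ α),
        energySq ω η (fun x => u x ^ α) / (B.card : ℝ) ≤
          C₂ * (α ^ 4 / (2 * α - 1) ^ 2) * gradSup G η ^ 2 *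
            nrmW B 1 (mu nbr ω) (fun x => u x ^ (2 * α)) := by
  refine ⟨32, by norm_num, ?_⟩
  intro V G nbr hnbr ω hsymm hpos hzero B _ η hout hη hbdry u hu hlap α hα
  have hen := energySq_rpow_le hnbr hsymm hpos hzero hout hη hbdry hu hlap hα
  have hnrm : nrmW B 1 (mu nbr ω) (fun x => u x ^ (2 * α)) =
      (B.card : ℝ)⁻¹ * ∑ x ∈ B, (u x ^ α) ^ 2 * mu nbr ω x := by
    rw [nrmW, one_div_one, Real.rpow_one]
    congr 1
    refine sum_congr rfl fun x _ => ?_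
    rw [Real.rpow_one, abs_of_pos (Real.rpow_pos_of_pos (hu x) _), mul_comm 2 α,
      Real.rpow_mul (hu x).le, Real.rpow_two]
  have hmass : 0 ≤ ∑ x ∈ B, (u x ^ α) ^ 2 * mu nbr ω x := sum_nonneg fun x _ =>
    mul_nonneg (sq_nonneg _) (sum_nonneg fun y hy => (hpos x y ((hnbr x y).1 hy)).le)
  have hconst : 8 * α ^ 2 ≤ 32 * (α ^ 4 / (2 * α - 1) ^ 2) := by
    have hpos' : 0 < 2 * α - 1 := by linarith
    rw [← mul_div_assoc, le_div_iff₀ (by positivity)]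
    have : (2 * α - 1) ^ 2 ≤ 4 * α ^ 2 := by nlinarith
    nlinarith [mul_le_mul_of_nonneg_left this (by positivity : 0 ≤ 8 * α ^ 2)]
  rw [hnrm, div_eq_inv_mul, mul_left_comm]
  refine mul_le_mul_of_nonneg_left (hen.trans ?_) (by positivity)
  gcongr
end
end

section
/- Maximal inequality for the reciprocal of a harmonic function: let p, q ∈ (1,∞] satisfy 1/p + 1/q < 2/d and set p∗ := p/(p−1). There exist κ = κ(d,p,q) > 0 and C₄ < ∞, depending only on d, p, q, C_reg and C_riso, such that for every choice of edge weights ω, every x₀ ∈ V, n ≥ 1, every u : V → (0,∞) harmonic on B(x₀,n), every α ∈ (0,∞) and all σ′, σ with 1/2 ≤ σ′ < σ ≤ 1: max_{x∈B(x₀,σ′n)} u(x)⁻¹ ≤ (C₄·max{1, ‖μ^ω‖_{p,B(x₀,n)}·‖ν^ω‖_{q,B(x₀,n)}}/(σ−σ′)²)^{2p∗κ/α}·‖u⁻¹‖_{α,B(x₀,σn)}. -/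
open Finset MeasureTheory
open scoped ENNReal

noncomputable section

namespace RCM

variable {V : Type*}

open Classical in
/-- The relative isoperimetric inequality on all balls, averaged over the centre of the ball,
yields the isoperimetric inequality of order `d` for arbitrary finite sets. -/
lemma card_rpow_le_card_intBdry {d : ℕ} (hd : 2 ≤ d) {Creg Criso : ℝ} (hCreg : 0 < Creg)
    (hCriso : 0 < Criso) {G : SimpleGraph V} {ball : V → ℝ → Finset V}
    (hball : ∀ (x : V) (r : ℝ) (y : V), y ∈ ball x r ↔ (G.dist x y : ℝ) ≤ r)
    (hreg : ∀ (x : V) (r : ℝ), 1 ≤ r →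
      Creg⁻¹ * r ^ d ≤ ((ball x r).card : ℝ) ∧ ((ball x r).card : ℝ) ≤ Creg * r ^ d)
    (hriso : ∀ (x : V) (r : ℝ) (A : Finset V), 1 ≤ r → A.Nonempty → A ⊆ ball x r →
      (A.card : ℝ) < ((ball x r).card : ℝ) / 2 →
      Criso / r ≤ ((relBdry G (ball x r) A).card : ℝ) / (A.card : ℝ))
    (A : Finset V) (hA : A.Nonempty) :
    (A.card : ℝ) ^ (1 - 1 / (d : ℝ)) ≤
      Creg ^ 2 / Criso * (3 * Creg) ^ (1 / (d : ℝ)) * ((intBdry G A).card : ℝ) := by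
  have hd0 : (0 : ℝ) < d := by positivity
  have hcard : (1 : ℝ) ≤ A.card := by exact_mod_cast hA.card_pos
  have hCreg1 : 1 ≤ Creg := by
    obtain ⟨z, -⟩ := hA
    have h := hreg z 1 le_rfl
    have h' : Creg⁻¹ ≤ Creg := by simpa using h.1.trans h.2
    by_contra! hlt
    have := (one_lt_inv₀ hCreg).2 hlt
    linarith
  set r : ℝ := (3 * Creg * A.card) ^ (1 / (d : ℝ)) with hr
  have hr1 : 1 ≤ r := Real.one_le_rpow (by nlinarith) (by positivity)
  have hr0 : 0 < r := by linarith
  have hrd : r ^ d = 3 * Creg * A.card := by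
    rw [hr, ← Real.rpow_natCast, ← Real.rpow_mul (by positivity)]
    rw [one_div_mul_cancel hd0.ne', Real.rpow_one]
  have hlocal : ∀ x, ((A ∩ ball x r).card : ℝ) ≤
      r / Criso * ((intBdry G A ∩ ball x r).card : ℝ) := by
    intro x
    rcases (A ∩ ball x r).eq_empty_or_nonempty with he | hne
    · rw [he]; simp; positivity
    · have hpos : (0 : ℝ) < (A ∩ ball x r).card := by exact_mod_cast hne.card_pos
      have hsmall : ((A ∩ ball x r).card : ℝ) < ((ball x r).card : ℝ) / 2 := by
        have h1 : ((A ∩ ball x r).card : ℝ) ≤ A.card := by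
          exact_mod_cast card_le_card inter_subset_left
        have h2 := (hreg x r hr1).1
        rw [hrd] at h2
        have h3 : Creg⁻¹ * (3 * Creg * A.card) = 3 * (A.card : ℝ) := by field_simp
        linarith
      have h := hriso x r _ hr1 hne inter_subset_right hsmall
      have hsub : relBdry G (ball x r) (A ∩ ball x r) ⊆ intBdry G A ∩ ball x r := by
        intro z hz
        simp only [relBdry, intBdry, mem_filter, mem_inter] at hz ⊢
        obtain ⟨⟨hzA, hzb⟩, y, hyb, hyA, hadj⟩ := hz
        exact ⟨⟨hzA, y, fun h => hyA ⟨h, hyb⟩, hadj⟩, hzb⟩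
      have hsub' : ((relBdry G (ball x r) (A ∩ ball x r)).card : ℝ) ≤
          (intBdry G A ∩ ball x r).card := by exact_mod_cast card_le_card hsub
      rw [div_le_div_iff₀ hr0 hpos] at h
      rw [div_mul_eq_mul_div, le_div_iff₀ hCriso]
      nlinarith
  have hdouble : ∀ (X D : Finset V), (∀ z ∈ D, ball z r ⊆ X) →
      ∑ x ∈ X, (D ∩ ball x r).card = ∑ z ∈ D, (ball z r).card := by
    intro X D hX
    have h := sum_card_bipartiteAbove_eq_sum_card_bipartiteBelow
      (fun x z => z ∈ ball x r) (s := X) (t := D)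
    calc ∑ x ∈ X, (D ∩ ball x r).card = _ := by
          refine sum_congr rfl fun x _ => ?_
          rw [bipartiteAbove, filter_mem_eq_inter]
      _ = _ := h
      _ = _ := by
          refine sum_congr rfl fun z hz => ?_
          congr 1
          ext x
          simp only [bipartiteBelow, mem_filter, hball, G.dist_comm (u := x)]
          exact ⟨fun h => h.2, fun h => ⟨hX z hz ((hball z r x).2 h), h⟩⟩
  set X := A.biUnion fun z => ball z r
  have hXA : ∀ z ∈ A, ball z r ⊆ X := fun z hz => subset_biUnion_of_mem (fun z => ball z r) hz
  have hbA : intBdry G A ⊆ A := filter_subset _ _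
  have h1 : (A.card : ℝ) * (Creg⁻¹ * r ^ d) ≤ ∑ x ∈ X, ((A ∩ ball x r).card : ℝ) := by
    rw [← Nat.cast_sum, hdouble X A hXA, Nat.cast_sum, ← nsmul_eq_mul]
    exact card_nsmul_le_sum _ _ _ fun z _ => (hreg z r hr1).1
  have h2 : ∑ x ∈ X, ((intBdry G A ∩ ball x r).card : ℝ) ≤
      ((intBdry G A).card : ℝ) * (Creg * r ^ d) := by
    rw [← Nat.cast_sum, hdouble X _ fun z hz => hXA z (hbA hz), Nat.cast_sum, ← nsmul_eq_mul]
    exact sum_le_card_nsmul _ _ _ fun z _ => (hreg z r hr1).2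
  have h3 : (A.card : ℝ) * (Creg⁻¹ * r ^ d) ≤
      r / Criso * (((intBdry G A).card : ℝ) * (Creg * r ^ d)) := by
    refine h1.trans ((sum_le_sum fun x _ => hlocal x).trans ?_)
    rw [← mul_sum]
    gcongr
  have h4 : (A.card : ℝ) ≤ Creg ^ 2 / Criso * r * ((intBdry G A).card : ℝ) := by
    have hrdpos : 0 < r ^ d := by positivity
    have e1 : (A.card : ℝ) * (Creg⁻¹ * r ^ d) * (Creg * (r ^ d)⁻¹) = A.card := by field_simp
    have e2 : r / Criso * (((intBdry G A).card : ℝ) * (Creg * r ^ d)) * (Creg * (r ^ d)⁻¹) =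
        Creg ^ 2 / Criso * r * ((intBdry G A).card : ℝ) := by field_simp
    rw [← e1, ← e2]
    exact mul_le_mul_of_nonneg_right h3 (by positivity)
  have hApos : (0 : ℝ) < (A.card : ℝ) ^ (1 / (d : ℝ)) := by positivity
  rw [Real.rpow_sub (by linarith), Real.rpow_one, div_le_iff₀ hApos]
  rw [hr, Real.mul_rpow (by positivity) (by positivity)] at h4
  linarith

/-- The `ℓ¹`-Sobolev inequality: an isoperimetric inequality passes from indicator functions to
nonnegative finitely supported functions, by peeling off the lowest level set. -/
lemma sum_rpow_le_sum_posPart {G : SimpleGraph V} {nbr : V → Finset V}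
    (hnbr : ∀ x y, y ∈ nbr x ↔ G.Adj x y) {s K : ℝ} (hs : 1 ≤ s)
    (hiso : ∀ A : Finset V, A.Nonempty → (A.card : ℝ) ^ (1 / s) ≤ K * ((intBdry G A).card : ℝ))
    (S : Finset V) (f : V → ℝ) (hf : ∀ x, 0 ≤ f x) (hfS : ∀ x, x ∉ S → f x = 0) :
    (∑ x ∈ S, f x ^ s) ^ (1 / s) ≤ K * ∑ x ∈ S, ∑ y ∈ nbr x, max (f x - f y) 0 := by
  classical
  have hs0 : 0 < s := by linarith
  induction hk : (S.filter fun x => 0 < f x).card using Nat.strong_induction_on generalizing f with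
  | _ k ih =>
  set T := S.filter fun x => 0 < f x with hT
  have hTmem : ∀ x, x ∈ T ↔ 0 < f x := fun x => by
    simp only [hT, mem_filter, and_iff_right_iff_imp]
    intro h
    by_contra hx
    exact h.ne' (hfS x hx)
  have hTz : ∀ x, x ∉ T → f x = 0 := fun x hx =>
    le_antisymm (not_lt.1 fun h => hx ((hTmem x).2 h)) (hf x)
  rcases T.eq_empty_or_nonempty with he | hne
  · have hz : ∀ x, f x = 0 := fun x => hTz x (by simp [he])
    simp [hz, Real.zero_rpow hs0.ne', Real.zero_rpow (inv_pos.2 hs0).ne']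
  obtain ⟨x₁, hx₁, hmin⟩ := T.exists_min_image f hne
  set m := f x₁ with hm
  have hm0 : 0 < m := (hTmem x₁).1 hx₁
  set χ : V → ℝ := fun x => if x ∈ T then 1 else 0 with hχ
  set g : V → ℝ := fun x => f x - m * χ x with hg
  have hgT : ∀ x, x ∈ T → g x = f x - m := fun x hx => by simp [hg, hχ, hx]
  have hgn : ∀ x, x ∉ T → g x = 0 := fun x hx => by simp [hg, hχ, hx, hTz x hx]
  have hg0 : ∀ x, 0 ≤ g x := fun x => by
    by_cases hx : x ∈ T
    · rw [hgT x hx]; linarith [hmin x hx]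
    · rw [hgn x hx]
  have hTS : T ⊆ S := filter_subset _ _
  have hlt : (S.filter fun x => 0 < g x).card < k := by
    rw [← hk]
    refine card_lt_card ((ssubset_iff_of_subset fun x hx => ?_).2 ⟨x₁, hx₁, ?_⟩)
    · by_contra hxT
      exact (mem_filter.1 hx).2.ne' (hgn x hxT)
    · simp [hgT x₁ hx₁, hm]
  have hgrec := ih _ hlt g hg0 (fun x hx => hgn x fun h => hx (hTS h)) rfl
  have hsplit : ∀ x y, max (f x - f y) 0 = m * max (χ x - χ y) 0 + max (g x - g y) 0 := by
    intro x y
    by_cases hx : x ∈ T <;> by_cases hy : y ∈ T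
    · simp [hχ, hx, hy, hgT]
    · have := hg0 x
      rw [hgT x hx] at this
      rw [hgT x hx, hgn y hy, hTz y hy]
      simp only [hχ, hx, hy, if_true, if_false, sub_zero]
      rw [max_eq_left (hf x), max_eq_left zero_le_one, max_eq_left this]
      ring
    · have := hf y
      have h2 := hg0 y
      rw [hgn x hx, hTz x hx]
      simp only [hχ, hx, hy, if_true, if_false]
      rw [max_eq_right (by linarith), max_eq_right (by linarith), max_eq_right (by linarith)]
      ring
    · simp [hχ, hx, hy, hgn, hTz]
  have hK : 0 ≤ K := by
    have h := hiso T hne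
    have hc : (0 : ℝ) < (T.card : ℝ) ^ (1 / s) := by
      have : (0 : ℝ) < T.card := by exact_mod_cast hne.card_pos
      positivity
    by_contra! hK
    have : K * ((intBdry G T).card : ℝ) ≤ 0 :=
      mul_nonpos_of_nonpos_of_nonneg hK.le (Nat.cast_nonneg _)
    linarith
  have hbdry : ((intBdry G T).card : ℝ) ≤ ∑ x ∈ S, ∑ y ∈ nbr x, max (χ x - χ y) 0 := by
    have hsub : intBdry G T ⊆ S := (filter_subset _ _).trans hTS
    calc ((intBdry G T).card : ℝ) = ∑ x ∈ intBdry G T, (1 : ℝ) := by simp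
      _ ≤ ∑ x ∈ intBdry G T, ∑ y ∈ nbr x, max (χ x - χ y) 0 := by
          refine sum_le_sum fun x hx => ?_
          obtain ⟨hxT, y, hyT, hadj⟩ := mem_filter.1 hx
          have h1 : (1 : ℝ) = max (χ x - χ y) 0 := by simp [hχ, hxT, hyT]
          conv_lhs => rw [h1]
          exact single_le_sum (f := fun y => max (χ x - χ y) 0)
            (fun y _ => le_max_right _ _) ((hnbr x y).2 hadj)
      _ ≤ _ := sum_le_sum_of_subset_of_nonneg hsub
          fun x _ _ => sum_nonneg fun y _ => le_max_right _ _
  have hind : (∑ x ∈ S, (m * χ x) ^ s) ^ (1 / s) = m * (T.card : ℝ) ^ (1 / s) := by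
    have h1 : ∑ x ∈ S, (m * χ x) ^ s = m ^ s * T.card := by
      have : ∀ x ∈ S, (m * χ x) ^ s = if x ∈ T then m ^ s else 0 := fun x _ => by
        by_cases hx : x ∈ T <;> simp [hχ, hx, Real.zero_rpow hs0.ne']
      rw [sum_congr rfl this, ← sum_filter, filter_mem_eq_inter, inter_eq_right.2 hTS,
        sum_const, nsmul_eq_mul, mul_comm]
    rw [h1, Real.mul_rpow (by positivity) (by positivity), one_div,
      Real.rpow_rpow_inv hm0.le hs0.ne']
  calc (∑ x ∈ S, f x ^ s) ^ (1 / s) = (∑ x ∈ S, (m * χ x + g x) ^ s) ^ (1 / s) := by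
        simp [hg]
    _ ≤ (∑ x ∈ S, (m * χ x) ^ s) ^ (1 / s) + (∑ x ∈ S, g x ^ s) ^ (1 / s) :=
        Real.Lp_add_le_of_nonneg S hs
          (fun x _ => by simp only [hχ]; split_ifs <;> simp [hm0.le]) fun x _ => hg0 x
    _ ≤ m * (K * ∑ x ∈ S, ∑ y ∈ nbr x, max (χ x - χ y) 0) +
          K * ∑ x ∈ S, ∑ y ∈ nbr x, max (g x - g y) 0 := by
        rw [hind]
        gcongr
        exact (hiso T hne).trans (by gcongr)
    _ = _ := by
        simp only [hsplit, sum_add_distrib, ← mul_sum]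
        ring

lemma rpow_sub_rpow_le_s7 {γ X Y : ℝ} (hγ : 1 ≤ γ) (hX : 0 ≤ X) (hY : 0 ≤ Y) :
    max (X ^ γ - Y ^ γ) 0 ≤ γ * X ^ (γ - 1) * max (X - Y) 0 := by
  have hγ0 : 0 < γ := by linarith
  rcases hX.eq_or_lt with rfl | hX'
  · rw [Real.zero_rpow hγ0.ne', max_eq_right (by linarith [Real.rpow_nonneg hY γ])]
    exact mul_nonneg (mul_nonneg hγ0.le (Real.rpow_nonneg le_rfl _)) (le_max_right _ _)
  rcases le_total X Y with h | h
  · rw [max_eq_right (sub_nonpos.2 (Real.rpow_le_rpow hX h hγ0.le))]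
    exact mul_nonneg (mul_nonneg hγ0.le (Real.rpow_nonneg hX _)) (le_max_right _ _)
  · rw [max_eq_left (sub_nonneg.2 (Real.rpow_le_rpow hY h hγ0.le)), max_eq_left (sub_nonneg.2 h)]
    have hb := one_add_mul_self_le_rpow_one_add (s := Y / X - 1)
      (by have : 0 ≤ Y / X := by positivity
          linarith) hγ
    rw [add_sub_cancel, Real.div_rpow hY hX, le_div_iff₀ (by positivity)] at hb
    have e : X ^ γ = X ^ (γ - 1) * X := by
      rw [← Real.rpow_add_one hX'.ne', sub_add_cancel]
    have e2 : (1 + γ * (Y / X - 1)) * X ^ γ = X ^ γ - γ * X ^ (γ - 1) * (X - Y) := by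
      rw [e]; field_simp; ring
    linarith

/-- Weighted Sobolev inequality with the weight entering through `ν^ω` only. -/
lemma sum_rpow_le_nu_mul_energy {G : SimpleGraph V} {nbr : V → Finset V}
    (hnbr : ∀ x y, y ∈ nbr x ↔ G.Adj x y) {s K : ℝ} (hs : 1 ≤ s)
    (hiso : ∀ A : Finset V, A.Nonempty → (A.card : ℝ) ^ (1 / s) ≤ K * ((intBdry G A).card : ℝ))
    {ω : V → V → ℝ} (hω : ∀ x y, G.Adj x y → 0 < ω x y)
    {q q' ρ : ℝ} (hq : q.HolderConjugate q') (hρ : 0 < ρ) (hρq : 1 / ρ = 2 / s - 1 / q')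
    (S : Finset V) (f : V → ℝ) (hf : ∀ x, 0 ≤ f x) (hfS : ∀ x, x ∉ S → f x = 0) :
    (∑ x ∈ S, f x ^ (2 * ρ)) ^ (1 / ρ) ≤
      (K * (2 * ρ / s)) ^ 2 * ((∑ x ∈ S, nu nbr ω x ^ q) ^ (1 / q) *
        ∑ x ∈ S, ∑ y ∈ nbr x, ω x y * max (f x - f y) 0 ^ 2) := by
  have hs0 : 0 < s := by linarith
  have hq'0 : 0 < q' := hq.symm.pos
  set γ := 2 * ρ / s with hγdef
  have hγ1 : γ - 1 = ρ / q' := by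
    have : ρ * (1 / ρ) = ρ * (2 / s - 1 / q') := by rw [hρq]
    rw [mul_one_div_cancel hρ.ne'] at this
    rw [hγdef, this]; ring
  have hγ : 1 ≤ γ := by
    have : 0 < ρ / q' := by positivity
    linarith
  have hν : ∀ x, 0 ≤ nu nbr ω x := fun x =>
    sum_nonneg fun y hy => (inv_pos.2 (hω x y ((hnbr x y).1 hy))).le
  set X := ∑ x ∈ S, f x ^ (2 * ρ) with hX
  set E := ∑ x ∈ S, ∑ y ∈ nbr x, ω x y * max (f x - f y) 0 ^ 2 with hE
  set N := (∑ x ∈ S, nu nbr ω x ^ q) ^ (1 / q) with hN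
  have hX0 : 0 ≤ X := sum_nonneg fun x _ => Real.rpow_nonneg (hf x) _
  have hE0 : 0 ≤ E := sum_nonneg fun x _ => sum_nonneg fun y hy =>
    mul_nonneg (hω x y ((hnbr x y).1 hy)).le (sq_nonneg _)
  have hN0 : 0 ≤ N := Real.rpow_nonneg (sum_nonneg fun x _ => Real.rpow_nonneg (hν x) _) _
  rcases hX0.eq_or_lt with hXz | hXpos
  · rw [← hXz, Real.zero_rpow (by positivity)]
    positivity
  -- the `ℓ¹`-Sobolev inequality for `f ^ γ`
  have hsob := sum_rpow_le_sum_posPart hnbr hs hiso S (fun x => f x ^ γ)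
    (fun x => Real.rpow_nonneg (hf x) _)
    (fun x hx => by simp [hfS x hx, Real.zero_rpow (by linarith : γ ≠ 0)])
  have hpow : ∑ x ∈ S, (f x ^ γ) ^ s = X := sum_congr rfl fun x _ => by
    rw [← Real.rpow_mul (hf x), hγdef, div_mul_cancel₀ _ hs0.ne']
  simp only [hpow] at hsob
  set D := ∑ x ∈ S, ∑ y ∈ nbr x, f x ^ (γ - 1) * max (f x - f y) 0 with hD
  have hK : 0 ≤ K := by
    by_contra! hK
    have h1 : 0 < X ^ (1 / s) := by positivity
    have h2 : 0 ≤ ∑ x ∈ S, ∑ y ∈ nbr x, max (f x ^ γ - f y ^ γ) 0 :=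
      sum_nonneg fun x _ => sum_nonneg fun y _ => le_max_right _ _
    have h3 := mul_nonpos_of_nonpos_of_nonneg hK.le h2
    linarith
  have hXD : X ^ (1 / s) ≤ K * γ * D := by
    refine hsob.trans ?_
    rw [mul_assoc, hD, mul_sum]
    simp only [mul_sum]
    gcongr with x _ y _
    calc _ ≤ _ := rpow_sub_rpow_le_s7 hγ (hf x) (hf y)
      _ = _ := by ring
  have hD0 : 0 ≤ D := sum_nonneg fun x _ => sum_nonneg fun y _ =>
    mul_nonneg (Real.rpow_nonneg (hf x) _) (le_max_right _ _)
  -- Cauchy–Schwarz over directed edges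
  have hCS : D ^ 2 ≤ (∑ x ∈ S, f x ^ (2 * (γ - 1)) * nu nbr ω x) * E := by
    have h := sum_sq_le_sum_mul_sum_of_sq_le_mul (S.sigma nbr)
      (r := fun e => f e.1 ^ (γ - 1) * max (f e.1 - f e.2) 0)
      (f := fun e => f e.1 ^ (2 * (γ - 1)) * (ω e.1 e.2)⁻¹)
      (g := fun e => ω e.1 e.2 * max (f e.1 - f e.2) 0 ^ 2)
      (fun e he => mul_nonneg (Real.rpow_nonneg (hf _) _)
        (inv_pos.2 (hω _ _ ((hnbr _ _).1 (mem_sigma.1 he).2))).le)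
      (fun e he => mul_nonneg (hω _ _ ((hnbr _ _).1 (mem_sigma.1 he).2)).le (sq_nonneg _))
      (fun e he => by
        have hpos := hω _ _ ((hnbr _ _).1 (mem_sigma.1 he).2)
        rw [mul_comm 2 (γ - 1), Real.rpow_mul (hf _), Real.rpow_two]
        refine le_of_eq ?_
        field_simp)
    simp only [sum_sigma] at h
    simpa only [hD, hE, nu, mul_sum] using h
  have hHol : ∑ x ∈ S, f x ^ (2 * (γ - 1)) * nu nbr ω x ≤ N * X ^ (1 / q') := by
    have h := Real.inner_le_Lp_mul_Lq_of_nonneg S hq (f := nu nbr ω)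
      (g := fun x => f x ^ (2 * (γ - 1))) (fun x _ => hν x) (fun x _ => Real.rpow_nonneg (hf x) _)
    have e : ∑ x ∈ S, (f x ^ (2 * (γ - 1))) ^ q' = X := sum_congr rfl fun x _ => by
      rw [← Real.rpow_mul (hf x), hγ1]
      congr 1
      field_simp
    simp only [e] at h
    calc _ = ∑ x ∈ S, nu nbr ω x * f x ^ (2 * (γ - 1)) := sum_congr rfl fun x _ => mul_comm _ _
      _ ≤ _ := h
  have hsq : X ^ (2 / s) ≤ (K * γ) ^ 2 * (N * X ^ (1 / q') * E) := by
    calc X ^ (2 / s) = (X ^ (1 / s)) ^ 2 := by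
          rw [← Real.rpow_natCast, ← Real.rpow_mul hX0]; congr 1; push_cast; ring
      _ ≤ (K * γ * D) ^ 2 := by gcongr
      _ = (K * γ) ^ 2 * D ^ 2 := by ring
      _ ≤ _ := by
          gcongr
          exact hCS.trans (by gcongr)
  rw [hρq, Real.rpow_sub hXpos, div_le_iff₀ (by positivity)]
  calc _ ≤ _ := hsq
    _ = _ := by ring

/-- Negative powers of a positive harmonic function are subharmonic. -/
lemma sum_sub_inv_rpow_nonneg {nbr : V → Finset V} {ω : V → V → ℝ} {u : V → ℝ} {x : V}
    (hω : ∀ y ∈ nbr x, 0 < ω x y) (hu : ∀ x, 0 < u x) (hharm : lap nbr ω u x = 0)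
    {β : ℝ} (hβ : 0 < β) :
    ∑ y ∈ nbr x, ω x y * ((u x)⁻¹ ^ β - (u y)⁻¹ ^ β) ≤ 0 := by
  have hsum : ∑ y ∈ nbr x, ω x y * (u y - u x) = 0 := by
    rcases (nbr x).eq_empty_or_nonempty with he | hne
    · simp [he]
    · have hμ : 0 < mu nbr ω x := sum_pos hω hne
      exact (mul_eq_zero.1 hharm).resolve_left (inv_pos.2 hμ).ne'
  have htangent : ∀ y, (u x)⁻¹ ^ β - (u y)⁻¹ ^ β ≤ β * (u x)⁻¹ ^ β / u x * (u y - u x) := by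
    intro y
    have hr : 0 < u y / u x := div_pos (hu y) (hu x)
    have h1 : (u y)⁻¹ ^ β = (u x)⁻¹ ^ β * Real.exp (-(β * Real.log (u y / u x))) := by
      have : (u y)⁻¹ = (u x)⁻¹ * (u y / u x)⁻¹ := by
        have := (hu x).ne'
        have := (hu y).ne'
        field_simp
      rw [this, Real.mul_rpow (inv_pos.2 (hu x)).le (inv_pos.2 hr).le,
        Real.rpow_def_of_pos (inv_pos.2 hr), Real.log_inv]
      congr 2; ring
    have h2 := Real.add_one_le_exp (-(β * Real.log (u y / u x)))
    have h3 := mul_le_mul_of_nonneg_left (Real.log_le_sub_one_of_pos hr) hβ.le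
    have hA : 0 < (u x)⁻¹ ^ β := Real.rpow_pos_of_pos (inv_pos.2 (hu x)) _
    have h4 : 1 - β * (u y / u x - 1) ≤ Real.exp (-(β * Real.log (u y / u x))) := by linarith
    have h5 := mul_le_mul_of_nonneg_left h4 hA.le
    have e : (u x)⁻¹ ^ β * (1 - β * (u y / u x - 1)) =
        (u x)⁻¹ ^ β - β * (u x)⁻¹ ^ β / u x * (u y - u x) := by
      have := (hu x).ne'
      field_simp
    rw [h1]
    linarith
  calc ∑ y ∈ nbr x, ω x y * ((u x)⁻¹ ^ β - (u y)⁻¹ ^ β)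
      ≤ ∑ y ∈ nbr x, β * (u x)⁻¹ ^ β / u x * (ω x y * (u y - u x)) := by
        refine sum_le_sum fun y hy => ?_
        calc _ ≤ _ := mul_le_mul_of_nonneg_left (htangent y) (hω y hy).le
          _ = _ := by ring
    _ = 0 := by rw [← mul_sum, hsum, mul_zero]

/-- Caccioppoli inequality for a nonnegative function `g` that is subharmonic on the support of
the cut-off `η`. -/
lemma caccioppoli {G : SimpleGraph V} {nbr : V → Finset V}
    (hnbr : ∀ x y, y ∈ nbr x ↔ G.Adj x y) {ω : V → V → ℝ} (hsymm : ∀ x y, ω x y = ω y x)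
    (hω : ∀ x y, G.Adj x y → 0 < ω x y) (hω0 : ∀ x y, ¬ G.Adj x y → ω x y = 0)
    {T : Finset V} {g η : V → ℝ} (hg : ∀ x, 0 ≤ g x) {ℓ : ℝ}
    (hηT : ∀ x, η x ≠ 0 → x ∈ T ∧ nbr x ⊆ T)
    (hηlip : ∀ x y, G.Adj x y → |η x - η y| ≤ ℓ)
    (hsub : ∀ x, η x ≠ 0 → ∑ y ∈ nbr x, ω x y * (g x - g y) ≤ 0) :
    ∑ x ∈ T, ∑ y ∈ T, ω x y * (η x * g x - η y * g y) ^ 2 ≤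
      ℓ ^ 2 * ∑ x ∈ T, mu nbr ω x * g x ^ 2 := by
  have hωn : ∀ x y, 0 ≤ ω x y := fun x y => by
    by_cases h : G.Adj x y
    · exact (hω x y h).le
    · exact (hω0 x y h).ge
  have htest : ∑ x ∈ T, ∑ y ∈ T, ω x y * (η x ^ 2 * g x * (g x - g y)) ≤ 0 := by
    refine sum_nonpos fun x _ => ?_
    by_cases hx : η x = 0
    · simp [hx]
    · have h1 : ∑ y ∈ T, ω x y * (η x ^ 2 * g x * (g x - g y)) =
          η x ^ 2 * g x * ∑ y ∈ nbr x, ω x y * (g x - g y) := by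
        rw [← sum_subset (hηT x hx).2 fun y _ hy => by
          rw [hω0 x y fun h => hy ((hnbr x y).2 h), zero_mul], mul_sum]
        exact sum_congr rfl fun y _ => by ring
      rw [h1]
      exact mul_nonpos_of_nonneg_of_nonpos (mul_nonneg (sq_nonneg _) (hg x)) (hsub x hx)
  have hswap : ∑ x ∈ T, ∑ y ∈ T, ω x y * (η y ^ 2 * g y * (g y - g x)) ≤ 0 := by
    rw [sum_comm]
    simpa only [hsymm] using htest
  have hid : ∑ x ∈ T, ∑ y ∈ T, ω x y * (η x * g x - η y * g y) ^ 2 =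
      ∑ x ∈ T, ∑ y ∈ T, ω x y * (η x ^ 2 * g x * (g x - g y)) +
      ∑ x ∈ T, ∑ y ∈ T, ω x y * (η y ^ 2 * g y * (g y - g x)) +
      ∑ x ∈ T, ∑ y ∈ T, ω x y * (g x * g y * (η x - η y) ^ 2) := by
    simp only [← sum_add_distrib]
    exact sum_congr rfl fun x _ => sum_congr rfl fun y _ => by ring
  have hμ : ∀ x, ∑ y ∈ T, ω x y ≤ mu nbr ω x := fun x => by
    classical
    calc ∑ y ∈ T, ω x y ≤ ∑ y ∈ T ∪ nbr x, ω x y :=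
          sum_le_sum_of_subset_of_nonneg subset_union_left fun y _ _ => hωn x y
      _ = _ := (sum_subset subset_union_right fun y _ hy =>
          hω0 x y fun h => hy ((hnbr x y).2 h)).symm
  have hgrad : ∑ x ∈ T, ∑ y ∈ T, ω x y * (g x * g y * (η x - η y) ^ 2) ≤
      ∑ x ∈ T, ∑ y ∈ T, (ℓ ^ 2 / 2 * (ω x y * g x ^ 2) + ℓ ^ 2 / 2 * (ω x y * g y ^ 2)) := by
    refine sum_le_sum fun x _ => sum_le_sum fun y _ => ?_
    by_cases h : G.Adj x y
    · have h1 : (η x - η y) ^ 2 ≤ ℓ ^ 2 := sq_le_sq' (by linarith [(abs_le.1 (hηlip x y h)).1])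
        (abs_le.1 (hηlip x y h)).2
      have h2 : g x * g y ≤ (g x ^ 2 + g y ^ 2) / 2 := by nlinarith [sq_nonneg (g x - g y)]
      calc ω x y * (g x * g y * (η x - η y) ^ 2)
          ≤ ω x y * ((g x ^ 2 + g y ^ 2) / 2 * ℓ ^ 2) := by
            have := hωn x y
            gcongr
        _ = _ := by ring
    · simp [hω0 x y h]
  have hfold : ∑ x ∈ T, ∑ y ∈ T, ω x y * g y ^ 2 = ∑ x ∈ T, ∑ y ∈ T, ω x y * g x ^ 2 := by
    rw [sum_comm]
    exact sum_congr rfl fun x _ => sum_congr rfl fun y _ => by rw [hsymm]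
  have hfinal : ∑ x ∈ T, ∑ y ∈ T, ω x y * g x ^ 2 ≤ ∑ x ∈ T, mu nbr ω x * g x ^ 2 := by
    refine sum_le_sum fun x _ => ?_
    rw [← sum_mul]
    exact mul_le_mul_of_nonneg_right (hμ x) (sq_nonneg _)
  simp only [sum_add_distrib, ← mul_sum] at hgrad
  rw [hfold] at hgrad
  have := mul_le_mul_of_nonneg_left hfinal (sq_nonneg ℓ)
  linarith

/-- A function agreeing with the subharmonic function `g` on the smaller ball, supported in the
larger one, with controlled energy. If the radii differ by less than `2`, plain truncation
suffices. -/
lemma exists_cutoff {G : SimpleGraph V} {nbr : V → Finset V}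
    (hnbr : ∀ x y, y ∈ nbr x ↔ G.Adj x y) (hconn : G.Connected) {ball : V → ℝ → Finset V}
    (hball : ∀ (x : V) (r : ℝ) (y : V), y ∈ ball x r ↔ (G.dist x y : ℝ) ≤ r)
    {ω : V → V → ℝ} (hsymm : ∀ x y, ω x y = ω y x)
    (hω : ∀ x y, G.Adj x y → 0 < ω x y) (hω0 : ∀ x y, ¬ G.Adj x y → ω x y = 0)
    {x₀ : V} {r r' : ℝ} (hr : r' < r) {g : V → ℝ} (hg : ∀ x, 0 ≤ g x)
    (hsub : ∀ x ∈ ball x₀ r, ∑ y ∈ nbr x, ω x y * (g x - g y) ≤ 0) :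
    ∃ f : V → ℝ, (∀ x, 0 ≤ f x) ∧ (∀ x, x ∉ ball x₀ r → f x = 0) ∧
      (∀ x ∈ ball x₀ r', f x = g x) ∧
      ∑ x ∈ ball x₀ r, ∑ y ∈ nbr x, ω x y * max (f x - f y) 0 ^ 2 ≤
        4 / (r - r') ^ 2 * ∑ x ∈ ball x₀ r, mu nbr ω x * g x ^ 2 := by
  classical
  have hδ : 0 < r - r' := by linarith
  have hωn : ∀ x y, 0 ≤ ω x y := fun x y => by
    by_cases h : G.Adj x y
    · exact (hω x y h).le
    · exact (hω0 x y h).ge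
  have hμ : ∀ x, 0 ≤ mu nbr ω x := fun x => sum_nonneg fun y _ => hωn x y
  have hsum0 : 0 ≤ ∑ x ∈ ball x₀ r, mu nbr ω x * g x ^ 2 :=
    sum_nonneg fun x _ => mul_nonneg (hμ x) (sq_nonneg _)
  rcases lt_or_ge (r - r') 2 with hsmall | hlarge
  · refine ⟨fun x => if x ∈ ball x₀ r then g x else 0, fun x => ?_, fun x hx => by simp [hx],
      fun x hx => ?_, ?_⟩
    · dsimp only
      split_ifs
      · exact hg x
      · exact le_rfl
    · have : x ∈ ball x₀ r := (hball _ _ _).2 (((hball _ _ _).1 hx).trans hr.le)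
      simp [this]
    · have h1 : 1 ≤ 4 / (r - r') ^ 2 := by
        rw [le_div_iff₀ (by positivity)]
        nlinarith
      refine le_trans ?_ (le_mul_of_one_le_left hsum0 h1)
      refine sum_le_sum fun x hx => ?_
      rw [mu, sum_mul]
      refine sum_le_sum fun y _ => mul_le_mul_of_nonneg_left ?_ (hωn x y)
      refine pow_le_pow_left₀ (le_max_right _ _) (max_le ?_ (hg x)) 2
      simp only [hx, if_true]
      split_ifs
      · linarith [hg y]
      · simp
  · set L := r - r' - 1 with hL
    have hL0 : 0 < L := by linarith
    set η : V → ℝ := fun x => max (min ((r - 1 - G.dist x₀ x) / L) 1) 0 with hη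
    have hη0 : ∀ x, 0 ≤ η x := fun x => le_max_right _ _
    have hdist : ∀ x y, G.Adj x y → |(G.dist x₀ x : ℝ) - G.dist x₀ y| ≤ 1 := by
      intro x y h
      have h1 : G.dist x y = 1 := SimpleGraph.dist_eq_one_iff_adj.2 h
      have h2 := hconn.dist_triangle (u := x₀) (v := x) (w := y)
      have h3 := hconn.dist_triangle (u := x₀) (v := y) (w := x)
      rw [G.dist_comm (u := y), h1] at h3
      rw [h1] at h2
      have h2' : (G.dist x₀ y : ℝ) ≤ G.dist x₀ x + 1 := by exact_mod_cast h2
      have h3' : (G.dist x₀ x : ℝ) ≤ G.dist x₀ y + 1 := by exact_mod_cast h3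
      rw [abs_le]; constructor <;> linarith
    have hηsupp : ∀ x, η x ≠ 0 → (G.dist x₀ x : ℝ) ≤ r - 1 := by
      intro x hx
      by_contra! h
      refine hx (max_eq_right ((min_le_left _ _).trans ?_))
      exact div_nonpos_of_nonpos_of_nonneg (by linarith) hL0.le
    have hηT : ∀ x, η x ≠ 0 → x ∈ ball x₀ r ∧ nbr x ⊆ ball x₀ r := by
      intro x hx
      have h := hηsupp x hx
      refine ⟨(hball _ _ _).2 (by linarith), fun y hy => (hball _ _ _).2 ?_⟩
      have := (abs_le.1 (hdist x y ((hnbr x y).1 hy))).1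
      linarith
    have hlip : ∀ x y, G.Adj x y → |η x - η y| ≤ 1 / L := by
      intro x y h
      have h1 : |η x - η y| ≤
          |(r - 1 - G.dist x₀ x) / L - (r - 1 - G.dist x₀ y) / L| := by
        exact (abs_max_sub_max_le_abs _ _ 0).trans (abs_inf_sub_inf_le_abs _ _ 1)
      refine h1.trans ?_
      rw [← sub_div, abs_div, abs_of_pos hL0]
      gcongr
      rw [sub_sub_sub_cancel_left, abs_sub_comm]
      exact hdist x y h
    have hcac := caccioppoli hnbr hsymm hω hω0 hg hηT hlip fun x hx => hsub x (hηT x hx).1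
    refine ⟨fun x => η x * g x, fun x => mul_nonneg (hη0 x) (hg x), fun x hx => ?_,
      fun x hx => ?_, ?_⟩
    · have : η x = 0 := by
        by_contra h
        exact hx (hηT x h).1
      simp [this]
    · have : η x = 1 := by
        have h1 : 1 ≤ (r - 1 - G.dist x₀ x) / L := by
          rw [le_div_iff₀ hL0, hL]
          linarith [(hball _ _ _).1 hx]
        simp [hη, min_eq_right h1]
      simp [this]
    · have hLδ : (1 / L) ^ 2 ≤ 4 / (r - r') ^ 2 := by
        rw [one_div, inv_pow, inv_eq_one_div, div_le_div_iff₀ (by positivity) (by positivity)]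
        nlinarith
      refine le_trans ?_ (hcac.trans (mul_le_mul_of_nonneg_right hLδ hsum0))
      refine sum_le_sum fun x _ => ?_
      by_cases hx : η x = 0
      · have : ∀ y, max (η x * g x - η y * g y) 0 = 0 := fun y =>
          max_eq_right (by rw [hx]; linarith [mul_nonneg (hη0 y) (hg y)])
        simp only [this]
        simpa using sum_nonneg fun y _ => mul_nonneg (hωn x y) (sq_nonneg _)
      · calc ∑ y ∈ nbr x, ω x y * max (η x * g x - η y * g y) 0 ^ 2
            ≤ ∑ y ∈ nbr x, ω x y * (η x * g x - η y * g y) ^ 2 := by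
              refine sum_le_sum fun y _ => mul_le_mul_of_nonneg_left ?_ (hωn x y)
              rcases le_total (η x * g x - η y * g y) 0 with h | h
              · rw [max_eq_right h]; simpa using sq_nonneg _
              · rw [max_eq_left h]
          _ ≤ _ := sum_le_sum_of_subset_of_nonneg (hηT x hx).2
              fun y _ _ => mul_nonneg (hωn x y) (sq_nonneg _)

lemma sum_rpow_le_card_mul_nrm {A B : Finset V} (hAB : A ⊆ B) (hB : B.Nonempty) {p : ℝ}
    {f : V → ℝ} (hf : ∀ x, 0 ≤ f x) (hp : 0 < p) :
    (∑ x ∈ A, f x ^ p) ^ (1 / p) ≤ (B.card : ℝ) ^ (1 / p) * nrm B p f := by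
  have hc : (0 : ℝ) < B.card := by exact_mod_cast hB.card_pos
  simp only [nrm, abs_of_nonneg (hf _)]
  rw [← Real.mul_rpow hc.le (mul_nonneg (inv_pos.2 hc).le
    (sum_nonneg fun x _ => Real.rpow_nonneg (hf x) _)), mul_inv_cancel_left₀ hc.ne']
  refine Real.rpow_le_rpow (sum_nonneg fun x _ => Real.rpow_nonneg (hf x) _) ?_ (by positivity)
  exact sum_le_sum_of_subset_of_nonneg hAB fun x _ _ => Real.rpow_nonneg (hf x) _

/-- One step of Moser's iteration: a gain of integrability from `2 * p'` to `2 * ρ` for a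
nonnegative subharmonic function. -/
lemma moser_step {d : ℕ} (hd : 2 ≤ d) {Creg : ℝ} (hCreg : 0 < Creg) {G : SimpleGraph V}
    {nbr : V → Finset V}
    (hnbr : ∀ x y, y ∈ nbr x ↔ G.Adj x y) (hconn : G.Connected) {ball : V → ℝ → Finset V}
    (hball : ∀ (x : V) (r : ℝ) (y : V), y ∈ ball x r ↔ (G.dist x y : ℝ) ≤ r)
    {s K : ℝ} (hs : 1 ≤ s) (hsd : 1 / s = 1 - 1 / (d : ℝ))
    (hiso : ∀ A : Finset V, A.Nonempty → (A.card : ℝ) ^ (1 / s) ≤ K * ((intBdry G A).card : ℝ))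
    {ω : V → V → ℝ} (hsymm : ∀ x y, ω x y = ω y x)
    (hω : ∀ x y, G.Adj x y → 0 < ω x y) (hω0 : ∀ x y, ¬ G.Adj x y → ω x y = 0)
    {p p' q q' ρ : ℝ} (hp : p.HolderConjugate p') (hq : q.HolderConjugate q') (hρ : 0 < ρ)
    (hρq : 1 / ρ = 2 / s - 1 / q')
    {x₀ : V} {n : ℝ} (hn : 1 ≤ n) (hreg : ((ball x₀ n).card : ℝ) ≤ Creg * n ^ d)
    {σ σ' : ℝ} (hσ : σ' < σ) (hσ1 : σ ≤ 1) {g : V → ℝ} (hg : ∀ x, 0 ≤ g x)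
    (hsub : ∀ x ∈ ball x₀ n, ∑ y ∈ nbr x, ω x y * (g x - g y) ≤ 0) :
    (((ball x₀ n).card : ℝ)⁻¹ * ∑ x ∈ ball x₀ (σ' * n), g x ^ (2 * ρ)) ^ (1 / ρ) ≤
      4 * (K * (2 * ρ / s)) ^ 2 * Creg ^ (2 / (d : ℝ)) *
        (nrm (ball x₀ n) p (mu nbr ω) * nrm (ball x₀ n) q (nu nbr ω)) / (σ - σ') ^ 2 *
      (((ball x₀ n).card : ℝ)⁻¹ * ∑ x ∈ ball x₀ (σ * n), g x ^ (2 * p')) ^ (1 / p') := by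
  have hd0 : (0 : ℝ) < d := by positivity
  have hn0 : 0 < n := by linarith
  have hp0 := hp.pos
  have hp'0 := hp.symm.pos
  have hq0 := hq.pos
  have hball_mono : ∀ {a b : ℝ}, a ≤ b → ball x₀ a ⊆ ball x₀ b := fun hab y hy =>
    (hball _ _ _).2 (((hball _ _ _).1 hy).trans hab)
  have hσn : σ * n ≤ n := by nlinarith
  have hσ'n : σ' * n < σ * n := by nlinarith
  have hT := hball_mono hσn
  have hne : (ball x₀ n).Nonempty := ⟨x₀, (hball _ _ _).2 (by simp; linarith)⟩
  set N : ℝ := ((ball x₀ n).card : ℝ) with hN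
  have hNpos : 0 < N := by simpa [hN] using hne.card_pos
  have hμ : ∀ x, 0 ≤ mu nbr ω x := fun x =>
    sum_nonneg fun y hy => (hω x y ((hnbr x y).1 hy)).le
  have hν : ∀ x, 0 ≤ nu nbr ω x := fun x =>
    sum_nonneg fun y hy => (inv_pos.2 (hω x y ((hnbr x y).1 hy))).le
  obtain ⟨f, hf0, hfT, hfg, hfE⟩ := exists_cutoff hnbr hconn hball hsymm hω hω0 hσ'n hg
    fun x hx => hsub x (hT hx)
  have hsob := sum_rpow_le_nu_mul_energy hnbr hs hiso hω hq hρ hρq _ f hf0 hfT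
  set X := ∑ x ∈ ball x₀ (σ' * n), g x ^ (2 * ρ) with hX
  set Y := ∑ x ∈ ball x₀ (σ * n), g x ^ (2 * p') with hY
  have hX0 : 0 ≤ X := sum_nonneg fun x _ => Real.rpow_nonneg (hg x) _
  have hY0 : 0 ≤ Y := sum_nonneg fun x _ => Real.rpow_nonneg (hg x) _
  have hXf : X ^ (1 / ρ) ≤ (∑ x ∈ ball x₀ (σ * n), f x ^ (2 * ρ)) ^ (1 / ρ) := by
    refine Real.rpow_le_rpow hX0 ?_ (by positivity)
    calc X = ∑ x ∈ ball x₀ (σ' * n), f x ^ (2 * ρ) := sum_congr rfl fun x hx => by rw [hfg x hx]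
      _ ≤ _ := sum_le_sum_of_subset_of_nonneg (hball_mono hσ'n.le)
          fun x _ _ => Real.rpow_nonneg (hf0 x) _
  set m := nrm (ball x₀ n) p (mu nbr ω) with hm
  set v := nrm (ball x₀ n) q (nu nbr ω) with hv
  have hm0 : 0 ≤ m := Real.rpow_nonneg (mul_nonneg (by positivity)
    (sum_nonneg fun x _ => Real.rpow_nonneg (abs_nonneg _) _)) _
  have hv0 : 0 ≤ v := Real.rpow_nonneg (mul_nonneg (by positivity)
    (sum_nonneg fun x _ => Real.rpow_nonneg (abs_nonneg _) _)) _
  have hμsum : ∑ x ∈ ball x₀ (σ * n), mu nbr ω x * g x ^ 2 ≤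
      N ^ (1 / p) * m * Y ^ (1 / p') := by
    have h := Real.inner_le_Lp_mul_Lq_of_nonneg (ball x₀ (σ * n)) hp (f := mu nbr ω)
      (g := fun x => g x ^ 2) (fun x _ => hμ x) fun x _ => sq_nonneg _
    have e : ∑ x ∈ ball x₀ (σ * n), (g x ^ 2) ^ p' = Y := sum_congr rfl fun x _ => by
      rw [← Real.rpow_two, ← Real.rpow_mul (hg x)]
    simp only [e] at h
    refine h.trans ?_
    gcongr
    exact sum_rpow_le_card_mul_nrm hT hne hμ hp0
  have hνsum : (∑ x ∈ ball x₀ (σ * n), nu nbr ω x ^ q) ^ (1 / q) ≤ N ^ (1 / q) * v :=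
    sum_rpow_le_card_mul_nrm hT hne hν hq0
  have hmain : X ^ (1 / ρ) ≤ (K * (2 * ρ / s)) ^ 2 * (N ^ (1 / q) * v *
      (4 / (σ * n - σ' * n) ^ 2 * (N ^ (1 / p) * m * Y ^ (1 / p')))) := by
    refine hXf.trans (hsob.trans ?_)
    refine mul_le_mul_of_nonneg_left ?_ (sq_nonneg _)
    refine mul_le_mul hνsum (hfE.trans (mul_le_mul_of_nonneg_left hμsum (by positivity))) ?_
      (by positivity)
    exact sum_nonneg fun x _ => sum_nonneg fun y hy =>
      mul_nonneg (hω x y ((hnbr x y).1 hy)).le (sq_nonneg _)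
  have hNn : N ^ (2 / (d : ℝ)) ≤ Creg ^ (2 / (d : ℝ)) * n ^ 2 := by
    have h := Real.rpow_le_rpow hNpos.le hreg (by positivity : 0 ≤ 2 / (d : ℝ))
    rw [Real.mul_rpow hCreg.le (by positivity), ← Real.rpow_natCast, ← Real.rpow_mul hn0.le,
      mul_div_cancel₀ _ hd0.ne', Real.rpow_two] at h
    exact h
  have hNexp : N ^ (1 / q) * N ^ (1 / p) = N ^ (1 / ρ) * (N⁻¹) ^ (1 / p') * N ^ (2 / (d : ℝ)) := by
    rw [Real.inv_rpow hNpos.le, ← Real.rpow_neg hNpos.le, ← Real.rpow_add hNpos,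
      ← Real.rpow_add hNpos, ← Real.rpow_add hNpos]
    congr 1
    have h1 := hp.one_div_add_one_div
    have h2 := hq.one_div_add_one_div
    have h3 : 2 / s = 2 * (1 / s) := by ring
    have h4 : 2 / (d : ℝ) = 2 * (1 / (d : ℝ)) := by ring
    rw [hρq, h3, h4, hsd]
    linarith
  rw [Real.mul_rpow (inv_pos.2 hNpos).le hX0, Real.mul_rpow (inv_pos.2 hNpos).le hY0]
  have hNρ : 0 < N ^ (1 / ρ) := by positivity
  rw [Real.inv_rpow hNpos.le, inv_mul_le_iff₀ hNρ]
  have hδ : 0 < σ - σ' := by linarith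
  calc X ^ (1 / ρ) ≤ _ := hmain
    _ = 4 * (K * (2 * ρ / s)) ^ 2 * (m * v) / (σ - σ') ^ 2 * Y ^ (1 / p') / n ^ 2 *
          (N ^ (1 / q) * N ^ (1 / p)) := by
        have : σ * n - σ' * n = (σ - σ') * n := by ring
        rw [this]
        field_simp
    _ = 4 * (K * (2 * ρ / s)) ^ 2 * (m * v) / (σ - σ') ^ 2 * Y ^ (1 / p') / n ^ 2 *
          (N ^ (1 / ρ) * (N⁻¹) ^ (1 / p')) * N ^ (2 / (d : ℝ)) := by
        rw [hNexp]; ring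
    _ ≤ 4 * (K * (2 * ρ / s)) ^ 2 * (m * v) / (σ - σ') ^ 2 * Y ^ (1 / p') / n ^ 2 *
          (N ^ (1 / ρ) * (N⁻¹) ^ (1 / p')) * (Creg ^ (2 / (d : ℝ)) * n ^ 2) := by
        gcongr
    _ = _ := by field_simp

/-- Moser's iteration along the exponents `α * (ρ / p') ^ k` and the scales
`σ' + (σ - σ') / 2 ^ k`. -/
lemma moser_iteration {S : ℝ → ℝ → ℝ} (hS : ∀ τ t, 0 ≤ S τ t) {ρ p' D N v α σ σ' : ℝ}
    (hp' : 0 < p') (hρ : p' < ρ) (hD : 1 ≤ D) (hN : 0 < N) (hα : 0 < α)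
    (hv : 0 ≤ v) (hσ : σ' < σ) (hσ1 : σ - σ' ≤ 1)
    (hstep : ∀ τ' τ t, σ' ≤ τ' → τ' < τ → τ ≤ σ → 0 < t →
      S τ' (ρ / p' * t) ^ (1 / ρ) ≤ D / (τ - τ') ^ 2 * S τ t ^ (1 / p'))
    (hpt : ∀ τ t, σ' ≤ τ → 0 < t → v ^ t ≤ N * S τ t) :
    v ≤ (4 * D / (σ - σ') ^ 2) ^ (p' * (∑' j : ℕ, ((j : ℝ) + 1) * ((ρ / p')⁻¹) ^ j) / α) *
      S σ α ^ (1 / α) := by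
  set θ := ρ / p' with hθ
  have hθ1 : 1 < θ := (one_lt_div hp').2 hρ
  have hθ0 : 0 < θ := by linarith
  have hρ0 : 0 < ρ := by linarith
  set δ := σ - σ' with hδ
  have hδ0 : 0 < δ := by linarith
  set b := 4 * D / δ ^ 2 with hb
  have hδ2 : 1 ≤ 1 / δ ^ 2 := by
    rw [le_div_iff₀ (by positivity)]
    nlinarith
  have hb4 : 4 ≤ b := by
    rw [hb, mul_div_assoc, div_eq_mul_one_div]
    nlinarith
  have hb1 : 1 ≤ b := by linarith
  set c : ℕ → ℝ := fun j => ((j : ℝ) + 1) * θ⁻¹ ^ j with hc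
  have hc0 : ∀ j, 0 ≤ c j := fun j => by positivity
  have hsum : Summable c := by
    have hlt : ‖θ⁻¹‖ < 1 := by
      rw [Real.norm_of_nonneg (by positivity)]
      exact inv_lt_one_of_one_lt₀ hθ1
    have h1 := summable_pow_mul_geometric_of_norm_lt_one 1 hlt
    have h2 := summable_pow_mul_geometric_of_norm_lt_one 0 hlt
    refine (h1.add h2).congr fun j => ?_
    simp only [hc]; ring
  set t : ℕ → ℝ := fun k => α * θ ^ k with ht
  have ht0 : ∀ k, 0 < t k := fun k => by positivity
  set τ : ℕ → ℝ := fun k => σ' + δ * (1 / 2) ^ k with hτ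
  have hτlo : ∀ k, σ' ≤ τ k := fun k => by
    have : 0 ≤ δ * (1 / 2 : ℝ) ^ k := by positivity
    simp only [hτ]; linarith
  have hτhi : ∀ k, τ k ≤ σ := fun k => by
    have : (1 / 2 : ℝ) ^ k ≤ 1 := pow_le_one₀ (by norm_num) (by norm_num)
    simp only [hτ]; nlinarith
  have hτdiff : ∀ k, τ k - τ (k + 1) = δ * (1 / 2) ^ (k + 1) := fun k => by
    simp only [hτ, pow_succ]; ring
  have hfactor : ∀ k, D / (τ k - τ (k + 1)) ^ 2 ≤ b ^ ((k : ℝ) + 1) := by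
    intro k
    have e : D / (τ k - τ (k + 1)) ^ 2 = (b / 4) * 4 ^ (k + 1) := by
      rw [hτdiff, hb, mul_pow, ← pow_mul, mul_comm (k + 1) 2, pow_mul]
      have : ((1 / 2 : ℝ) ^ 2) ^ (k + 1) = (4 ^ (k + 1))⁻¹ := by
        rw [← inv_pow]; norm_num
      rw [this]
      field_simp
    rw [e]
    have : b ^ ((k : ℝ) + 1) = b ^ (k + 1) := by exact_mod_cast Real.rpow_natCast b (k + 1)
    rw [this, pow_succ, pow_succ]
    have h4 : (4 : ℝ) ^ k ≤ b ^ k := pow_le_pow_left₀ (by norm_num) hb4 k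
    nlinarith
  set F : ℕ → ℝ := fun k => S (τ k) (t k) ^ (1 / t k) with hF
  have hF0 : ∀ k, 0 ≤ F k := fun k => Real.rpow_nonneg (hS _ _) _
  have hrec : ∀ k, F (k + 1) ≤ b ^ (p' / α * c k) * F k := by
    intro k
    have h := hstep (τ (k + 1)) (τ k) (t k) (hτlo _)
      (by have h1 := hτdiff k
          have : 0 < δ * (1 / 2 : ℝ) ^ (k + 1) := by positivity
          linarith) (hτhi _) (ht0 k)
    have h2 : S (τ (k + 1)) (t (k + 1)) ^ (1 / ρ) ≤
        b ^ ((k : ℝ) + 1) * S (τ k) (t k) ^ (1 / p') := by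
      have : t (k + 1) = θ * t k := by simp only [ht, pow_succ]; ring
      rw [this]
      exact h.trans (mul_le_mul_of_nonneg_right (hfactor k) (Real.rpow_nonneg (hS _ _) _))
    have h3 := Real.rpow_le_rpow (Real.rpow_nonneg (hS _ _) _) h2
      (div_nonneg hp'.le (ht0 k).le)
    rw [Real.mul_rpow (by positivity) (Real.rpow_nonneg (hS _ _) _), ← Real.rpow_mul (hS _ _),
      ← Real.rpow_mul (hS _ _), ← Real.rpow_mul (by positivity)] at h3
    have e1 : 1 / ρ * (p' / t k) = 1 / t (k + 1) := by
      simp only [ht, hθ, pow_succ]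
      field_simp
    have e2 : 1 / p' * (p' / t k) = 1 / t k := by
      have := (ht0 k).ne'
      field_simp
    have e3 : ((k : ℝ) + 1) * (p' / t k) = p' / α * c k := by
      simp only [ht, hc, inv_pow]
      field_simp
    rwa [e1, e2, e3] at h3
  have hind : ∀ k, F k ≤ b ^ (p' / α * ∑ j ∈ range k, c j) * F 0 := by
    intro k
    induction k with
    | zero => simp
    | succ k ih =>
      refine (hrec k).trans ?_
      rw [sum_range_succ, mul_add, Real.rpow_add (by linarith)]
      calc b ^ (p' / α * c k) * F k
          ≤ b ^ (p' / α * c k) * (b ^ (p' / α * ∑ j ∈ range k, c j) * F 0) := by gcongr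
        _ = _ := by ring
  set M := b ^ (p' / α * ∑' j, c j) * F 0 with hM
  have hbound : ∀ k, F k ≤ M := fun k => by
    refine (hind k).trans (mul_le_mul_of_nonneg_right ?_ (hF0 0))
    refine Real.rpow_le_rpow_of_exponent_le hb1 ?_
    have := hsum.sum_le_tsum (range k) fun j _ => hc0 j
    gcongr
  have hvk : ∀ k, v ≤ N ^ (1 / t k) * M := by
    intro k
    have h := Real.rpow_le_rpow (Real.rpow_nonneg hv _) (hpt (τ k) (t k) (hτlo k) (ht0 k))
      (one_div_nonneg.2 (ht0 k).le)
    rw [Real.mul_rpow hN.le (hS _ _), ← Real.rpow_mul hv, mul_one_div_cancel (ht0 k).ne',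
      Real.rpow_one] at h
    exact h.trans (mul_le_mul_of_nonneg_left (hbound k) (by positivity))
  have hlim : Filter.Tendsto (fun k => N ^ (1 / t k) * M) Filter.atTop (nhds M) := by
    have h1 : Filter.Tendsto (fun k => 1 / t k) Filter.atTop (nhds 0) := by
      simp only [one_div]
      exact ((tendsto_pow_atTop_atTop_of_one_lt hθ1).const_mul_atTop hα).inv_tendsto_atTop
    have h2 := (tendsto_const_nhds (x := N)).rpow h1 (Or.inl hN.ne')
    simpa using h2.mul_const M
  have hvM : v ≤ M := ge_of_tendsto' hlim hvk
  have hF0eq : F 0 = S σ α ^ (1 / α) := by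
    simp [hF, hτ, ht, hδ]
  rw [hM, hF0eq] at hvM
  rwa [mul_div_right_comm]

lemma nrm_le_nrmE {A : Finset V} (hA : A.Nonempty) {p : ℝ} {P : ℝ≥0∞} (hp : 0 < p)
    (hpP : ENNReal.ofReal p ≤ P) (f : V → ℝ) : nrm A p f ≤ nrmE A P f := by
  have hc : (0 : ℝ) < A.card := by exact_mod_cast hA.card_pos
  have hsum : ∑ _x ∈ A, (A.card : ℝ)⁻¹ = 1 := by
    rw [sum_const, nsmul_eq_mul, mul_inv_cancel₀ hc.ne']
  rw [nrmE]
  split_ifs with hP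
  · set M := sSup ((fun x => |f x|) '' (A : Set V)) with hM
    have hle : ∀ x ∈ A, |f x| ≤ M := fun x hx =>
      le_csSup (A.finite_toSet.image _).bddAbove ⟨x, hx, rfl⟩
    have hM0 : 0 ≤ M := by
      obtain ⟨x, hx⟩ := hA
      exact (abs_nonneg _).trans (hle x hx)
    have h : (A.card : ℝ)⁻¹ * ∑ x ∈ A, |f x| ^ p ≤ M ^ p := by
      rw [inv_mul_le_iff₀ hc, ← nsmul_eq_mul]
      exact sum_le_card_nsmul _ _ _ fun x hx => Real.rpow_le_rpow (abs_nonneg _) (hle x hx) hp.le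
    calc nrm A p f ≤ (M ^ p) ^ (1 / p) := Real.rpow_le_rpow (by positivity) h (by positivity)
      _ = M := by rw [one_div, Real.rpow_rpow_inv hM0 hp.ne']
  · have hpP' : p ≤ P.toReal := (ENNReal.ofReal_le_iff_le_toReal hP).1 hpP
    set r := P.toReal
    have hr : 0 < r := by linarith
    have h := Real.rpow_arith_mean_le_arith_mean_rpow A (fun _ => (A.card : ℝ)⁻¹)
      (fun x => |f x| ^ p) (fun _ _ => by positivity) hsum (fun _ _ => by positivity)
      (p := r / p) ((one_le_div hp).2 hpP')
    simp only [← mul_sum, ← Real.rpow_mul (abs_nonneg _), mul_div_cancel₀ r hp.ne'] at h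
    have h2 := Real.rpow_le_rpow (by positivity) h (by positivity : 0 ≤ 1 / r)
    rw [← Real.rpow_mul (by positivity)] at h2
    have e : r / p * (1 / r) = 1 / p := by field_simp
    rwa [e] at h2

/-- An extended exponent can be lowered to a finite one whose reciprocal is larger by `ε`. -/
lemma ofReal_inv_add_le {P : ℝ≥0∞} (hP : 1 < P) {ε : ℝ} (hε : 0 < ε) :
    ENNReal.ofReal ((P⁻¹).toReal + ε)⁻¹ ≤ P := by
  by_cases hT : P = ⊤
  · simp [hT]
  · have h0 : 0 < P.toReal := ENNReal.toReal_pos (by positivity) hT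
    rw [ENNReal.ofReal_le_iff_le_toReal hT, ENNReal.toReal_inv]
    exact inv_le_of_inv_le₀ h0 (by linarith)

/-- The maximal inequality for the reciprocal of a positive harmonic function, for finite
exponents. -/
lemma inv_le_mul_nrm_of_harmonic {d : ℕ} (hd : 2 ≤ d) {Creg : ℝ} (hCreg : 0 < Creg)
    {G : SimpleGraph V} {nbr : V → Finset V}
    (hnbr : ∀ x y, y ∈ nbr x ↔ G.Adj x y) (hconn : G.Connected) {ball : V → ℝ → Finset V}
    (hball : ∀ (x : V) (r : ℝ) (y : V), y ∈ ball x r ↔ (G.dist x y : ℝ) ≤ r)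
    {s K : ℝ} (hs : 1 ≤ s) (hsd : 1 / s = 1 - 1 / (d : ℝ))
    (hiso : ∀ A : Finset V, A.Nonempty → (A.card : ℝ) ^ (1 / s) ≤ K * ((intBdry G A).card : ℝ))
    {ω : V → V → ℝ} (hsymm : ∀ x y, ω x y = ω y x)
    (hω : ∀ x y, G.Adj x y → 0 < ω x y) (hω0 : ∀ x y, ¬ G.Adj x y → ω x y = 0)
    {p p' q q' ρ : ℝ} (hp : p.HolderConjugate p') (hq : q.HolderConjugate q') (hρ : p' < ρ)
    (hρq : 1 / ρ = 2 / s - 1 / q')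
    {x₀ : V} {n : ℝ} (hn : 1 ≤ n) (hreg : ((ball x₀ n).card : ℝ) ≤ Creg * n ^ d)
    {u : V → ℝ} (hu : ∀ x, 0 < u x) (hharm : ∀ x ∈ ball x₀ n, lap nbr ω u x = 0)
    {α : ℝ} (hα : 0 < α) {σ' σ : ℝ} (hσ' : 1 / 2 ≤ σ') (hσ : σ' < σ) (hσ1 : σ ≤ 1)
    {D : ℝ} (hD1 : 1 ≤ D) (hD : 4 * (K * (2 * ρ / s)) ^ 2 * Creg ^ (2 / (d : ℝ)) *
      (nrm (ball x₀ n) p (mu nbr ω) * nrm (ball x₀ n) q (nu nbr ω)) ≤ D)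
    {x : V} (hx : x ∈ ball x₀ (σ' * n)) :
    (u x)⁻¹ ≤
      (4 * D / (σ - σ') ^ 2) ^ (p' * (∑' j : ℕ, ((j : ℝ) + 1) * ((ρ / p')⁻¹) ^ j) / α) *
        nrm (ball x₀ (σ * n)) α (fun x => (u x)⁻¹) := by
  have hp'0 : 0 < p' := hp.symm.pos
  have hρ0 : 0 < ρ := hp'0.trans hρ
  have hball_mono : ∀ {r t : ℝ}, r ≤ t → ball x₀ r ⊆ ball x₀ t := fun hrt y hy =>
    (hball _ _ _).2 (((hball _ _ _).1 hy).trans hrt)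
  have hx₀ : ∀ r : ℝ, 0 ≤ r → x₀ ∈ ball x₀ r := fun r hr => (hball _ _ _).2 (by simpa using hr)
  have hne : (ball x₀ n).Nonempty := ⟨x₀, hx₀ n (by linarith)⟩
  set N : ℝ := ((ball x₀ n).card : ℝ) with hN
  have hN0 : 0 < N := by simpa [hN] using hne.card_pos
  have hui : ∀ x, 0 < (u x)⁻¹ := fun x => inv_pos.2 (hu x)
  have hS0 : ∀ τ t : ℝ, 0 ≤ N⁻¹ * ∑ y ∈ ball x₀ (τ * n), (u y)⁻¹ ^ t := fun τ t =>
    mul_nonneg (by positivity) (sum_nonneg fun y _ => Real.rpow_nonneg (hui y).le _)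
  have hiter := moser_iteration (S := fun τ t => N⁻¹ * ∑ y ∈ ball x₀ (τ * n), (u y)⁻¹ ^ t)
    hS0 hp'0 hρ hD1 hN0 hα (hui x).le hσ (by linarith) ?_ ?_
  · refine hiter.trans ?_
    refine mul_le_mul_of_nonneg_left ?_ (Real.rpow_nonneg (by positivity) _)
    simp only [nrm, abs_of_pos (hui _)]
    refine Real.rpow_le_rpow (hS0 σ α) ?_ (by positivity)
    refine mul_le_mul_of_nonneg_right ?_ (sum_nonneg fun y _ => Real.rpow_nonneg (hui y).le _)
    have hpos : 0 < (ball x₀ (σ * n)).card := card_pos.2 ⟨x₀, hx₀ _ (by nlinarith)⟩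
    refine inv_anti₀ (by exact_mod_cast hpos) ?_
    rw [hN]
    exact_mod_cast card_le_card (hball_mono (by nlinarith))
  · intro τ' τ t _ hττ hτσ ht
    have hβ : 0 < t / (2 * p') := by positivity
    have h := moser_step hd hCreg hnbr hconn hball hs hsd hiso hsymm hω hω0 hp hq hρ0 hρq
      hn hreg hττ (hτσ.trans hσ1)
      (g := fun y => (u y)⁻¹ ^ (t / (2 * p'))) (fun y => Real.rpow_nonneg (hui y).le _)
      fun y hy => sum_sub_inv_rpow_nonneg (fun z hz => hω y z ((hnbr y z).1 hz)) hu
        (hharm y hy) hβ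
    have e1 : t / (2 * p') * (2 * ρ) = ρ / p' * t := by field_simp
    have e2 : t / (2 * p') * (2 * p') = t := by field_simp
    simp only [← Real.rpow_mul (hui _).le, e1, e2] at h
    refine h.trans (mul_le_mul_of_nonneg_right ?_ (Real.rpow_nonneg (hS0 τ t) _))
    exact div_le_div_of_nonneg_right hD (sq_nonneg _)
  · intro τ t hτ _
    rw [mul_inv_cancel_left₀ hN0.ne']
    have hx' : x ∈ ball x₀ (τ * n) := hball_mono (by nlinarith) hx
    exact single_le_sum (f := fun y => (u y)⁻¹ ^ t)
      (fun y _ => Real.rpow_nonneg (hui y).le _) hx'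

end RCM

open RCM in
/-- **Maximal inequality for the reciprocal of a harmonic function.** -/
theorem max_inequality_reciprocal_harmonic
    (d : ℕ) (hd : 2 ≤ d) (Creg Criso : ℝ) (hCreg : 0 < Creg) (hCriso : 0 < Criso)
    (p q : ℝ≥0∞) (hp : 1 < p) (hq : 1 < q) (hpq : p⁻¹ + q⁻¹ < 2 / (d : ℝ≥0∞)) :
    ∃ κ C₄ : ℝ, 0 < κ ∧ 0 < C₄ ∧
      ∀ (V : Type) (G : SimpleGraph V) (nbr : V → Finset V)
        (_ : ∀ x y, y ∈ nbr x ↔ G.Adj x y)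
        (_ : Infinite V) (_ : G.Connected)
        (ball : V → ℝ → Finset V)
        (_ : ∀ (x : V) (r : ℝ) (y : V), y ∈ ball x r ↔ (G.dist x y : ℝ) ≤ r)
        (_ : ∀ (x : V) (r : ℝ), 1 ≤ r →
              Creg⁻¹ * r ^ d ≤ ((ball x r).card : ℝ) ∧ ((ball x r).card : ℝ) ≤ Creg * r ^ d)
        (_ : ∀ (x : V) (r : ℝ) (A : Finset V), 1 ≤ r → A.Nonempty → A ⊆ ball x r →
              (A.card : ℝ) < ((ball x r).card : ℝ) / 2 →
              Criso / r ≤ ((RCM.relBdry G (ball x r) A).card : ℝ) / (A.card : ℝ))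
        (ω : V → V → ℝ)
        (_ : ∀ x y, ω x y = ω y x)
        (_ : ∀ x y, G.Adj x y → 0 < ω x y)
        (_ : ∀ x y, ¬ G.Adj x y → ω x y = 0)
        (x₀ : V) (n : ℝ) (_ : 1 ≤ n)
        (u : V → ℝ) (_ : ∀ x, 0 < u x)
        (_ : ∀ x ∈ ball x₀ n, lap nbr ω u x = 0)
        (α : ℝ) (_ : 0 < α)
        (σ' σ : ℝ) (_ : 1 / 2 ≤ σ') (_ : σ' < σ) (_ : σ ≤ 1),
        sSup ((fun x => (u x)⁻¹) '' (ball x₀ (σ' * n) : Set V)) ≤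
          (C₄ * max 1 (nrmE (ball x₀ n) p (mu nbr ω) * nrmE (ball x₀ n) q (nu nbr ω)) /
              (σ - σ') ^ 2) ^ (2 * ((1 - p⁻¹)⁻¹).toReal * κ / α) *
            nrm (ball x₀ (σ * n)) α (fun x => (u x)⁻¹) := by
  have hd0 : (0 : ℝ) < d := by positivity
  have hd2 : (2 : ℝ) ≤ d := by exact_mod_cast hd
  have h1d : 1 / (d : ℝ) ≤ 1 / 2 := one_div_le_one_div_of_le (by norm_num) hd2
  set a := (p⁻¹).toReal with ha
  set b := (q⁻¹).toReal with hb
  have hpinv : p⁻¹ ≠ ⊤ := ENNReal.inv_ne_top.2 (by positivity)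
  have hqinv : q⁻¹ ≠ ⊤ := ENNReal.inv_ne_top.2 (by positivity)
  have ha0 : 0 ≤ a := ENNReal.toReal_nonneg
  have hb0 : 0 ≤ b := ENNReal.toReal_nonneg
  have hab : a + b < 2 * (1 / (d : ℝ)) := by
    have hdtop : 2 / (d : ℝ≥0∞) ≠ ⊤ :=
      ENNReal.div_ne_top (by norm_num) (by exact_mod_cast (by omega : d ≠ 0))
    have h := (ENNReal.toReal_lt_toReal (ENNReal.add_ne_top.2 ⟨hpinv, hqinv⟩) hdtop).2 hpq
    rw [ENNReal.toReal_add hpinv hqinv, ENNReal.toReal_div] at h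
    simp only [ENNReal.toReal_ofNat, ENNReal.toReal_natCast] at h
    rw [mul_one_div]
    exact h
  -- lower both exponents to finite ones, keeping the strict inequality
  obtain ⟨ε, hε, hεab⟩ : ∃ ε : ℝ, 0 < ε ∧ a + ε + (b + ε) < 2 * (1 / (d : ℝ)) :=
    ⟨(2 * (1 / (d : ℝ)) - (a + b)) / 3, by linarith, by linarith⟩
  set P := (a + ε)⁻¹ with hP
  set Q := (b + ε)⁻¹ with hQ
  have hP1 : 1 < P := (one_lt_inv₀ (by linarith)).2 (by linarith)
  have hQ1 : 1 < Q := (one_lt_inv₀ (by linarith)).2 (by linarith)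
  have hPc := Real.HolderConjugate.conjExponent hP1
  have hQc := Real.HolderConjugate.conjExponent hQ1
  set P' := P.conjExponent
  set Q' := Q.conjExponent
  have hP'0 : 0 < P' := hPc.symm.pos
  have hP'1 : 1 / P' = 1 - (a + ε) := by
    have h := hPc.one_div_add_one_div
    rw [hP, one_div, inv_inv] at h
    linarith
  have hQ'1 : 1 / Q' = 1 - (b + ε) := by
    have h := hQc.one_div_add_one_div
    rw [hQ, one_div, inv_inv] at h
    linarith
  set s := (1 - 1 / (d : ℝ))⁻¹ with hsdef
  have hsd : 1 / s = 1 - 1 / (d : ℝ) := by rw [hsdef, one_div, inv_inv]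
  have hs1 : 1 ≤ s := (one_le_inv₀ (by linarith)).2 (by linarith [one_div_pos.2 hd0])
  have hs2 : 2 / s = 2 * (1 / s) := by ring
  set ρ := (2 / s - 1 / Q')⁻¹ with hρdef
  have hρinv : 1 / ρ = 2 / s - 1 / Q' := by rw [hρdef, one_div, inv_inv]
  have hρpos : 0 < ρ := inv_pos.2 (by rw [hs2, hsd, hQ'1]; linarith)
  have hP'ρ : P' < ρ := by
    refine (one_div_lt_one_div hρpos hP'0).1 ?_
    rw [hρinv, hs2, hsd, hQ'1, hP'1]
    linarith
  set κ₀ := ∑' j : ℕ, ((j : ℝ) + 1) * ((ρ / P')⁻¹) ^ j with hκ₀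
  set pstar := ((1 - p⁻¹)⁻¹).toReal with hpstar
  have hpstar0 : 0 < pstar := by
    refine ENNReal.toReal_pos (ENNReal.inv_ne_zero.2 ?_) (ENNReal.inv_ne_top.2 ?_)
    · exact ENNReal.sub_ne_top ENNReal.one_ne_top
    · exact (tsub_pos_of_lt (ENNReal.inv_lt_one.2 hp)).ne'
  set K := Creg ^ 2 / Criso * (3 * Creg) ^ (1 / (d : ℝ)) with hK
  set C₀ := 4 * (K * (2 * ρ / s)) ^ 2 * Creg ^ (2 / (d : ℝ)) with hC₀
  have hC₀0 : 0 ≤ C₀ := by positivity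
  have hκ₀pos : 0 < κ₀ := by
    have hθ1 : 1 < ρ / P' := (one_lt_div hP'0).2 hP'ρ
    have hlt : ‖(ρ / P')⁻¹‖ < 1 := by
      rw [Real.norm_of_nonneg (by positivity)]
      exact inv_lt_one_of_one_lt₀ hθ1
    have h1 := summable_pow_mul_geometric_of_norm_lt_one 1 hlt
    have h2 := summable_pow_mul_geometric_of_norm_lt_one 0 hlt
    refine Summable.tsum_pos ((h1.add h2).congr fun j => ?_) (fun j => by positivity) 0 (by simp)
    ring
  refine ⟨P' * κ₀ / (2 * pstar), 4 * max 1 C₀, by positivity, by positivity, ?_⟩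
  intro V G nbr hnbr _ hconn ball hball hreg hriso ω hsymm hω hω0 x₀ n hn u hu hharm α hα
    σ' σ hσ' hσ hσ1
  have hexp : 2 * pstar * (P' * κ₀ / (2 * pstar)) / α = P' * κ₀ / α := by field_simp
  rw [hexp]
  have hiso : ∀ A : Finset V, A.Nonempty →
      (A.card : ℝ) ^ (1 / s) ≤ K * ((intBdry G A).card : ℝ) := fun A hA => by
    rw [hsd]
    exact card_rpow_le_card_intBdry hd hCreg hCriso hball hreg hriso A hA
  have hx₀ : ∀ r : ℝ, 0 ≤ r → x₀ ∈ ball x₀ r := fun r hr => (hball _ _ _).2 (by simpa using hr)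
  have hne : (ball x₀ n).Nonempty := ⟨x₀, hx₀ n (by linarith)⟩
  set Λ := max 1 (nrmE (ball x₀ n) p (mu nbr ω) * nrmE (ball x₀ n) q (nu nbr ω)) with hΛ
  have hΛ1 : 1 ≤ Λ := le_max_left _ _
  have hnrm0 : ∀ (r : ℝ) (f : V → ℝ), 0 ≤ nrm (ball x₀ n) r f := fun r f =>
    Real.rpow_nonneg (by positivity) _
  have hnorms : nrm (ball x₀ n) P (mu nbr ω) * nrm (ball x₀ n) Q (nu nbr ω) ≤ Λ := by
    have h1 := nrm_le_nrmE hne (by linarith) (ofReal_inv_add_le hp hε) (mu nbr ω)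
    have h2 := nrm_le_nrmE hne (by linarith) (ofReal_inv_add_le hq hε) (nu nbr ω)
    exact (mul_le_mul h1 h2 (hnrm0 _ _) ((hnrm0 _ _).trans h1)).trans (le_max_right _ _)
  have hDle : C₀ * (nrm (ball x₀ n) P (mu nbr ω) * nrm (ball x₀ n) Q (nu nbr ω)) ≤
      max 1 C₀ * Λ :=
    mul_le_mul (le_max_right _ _) hnorms (mul_nonneg (hnrm0 _ _) (hnrm0 _ _)) (by positivity)
  have hD1 : 1 ≤ max 1 C₀ * Λ := one_le_mul_of_one_le_of_one_le (le_max_left _ _) hΛ1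
  refine csSup_le ⟨_, x₀, hx₀ _ (by nlinarith), rfl⟩ ?_
  rintro _ ⟨x, hx, rfl⟩
  rw [mul_assoc 4]
  exact inv_le_mul_nrm_of_harmonic hd hCreg hnbr hconn hball hs1 hsd hiso hsymm hω hω0 hPc hQc
    hP'ρ hρinv hn (hreg x₀ n hn).2 hu hharm hα hσ' hσ hσ1 hD1 hDle hx
end
end
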